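/- arXiv:1605.05131 — 3 statements merged into one kernel-verified Lean document; each statement's English description precedes it below -/
import Mathlib

section
/- A matrix of Mat_n(F) is the sum of two square-zero matrices if and only if each of its invariant factors is an even polynomial or an odd polynomial. -/
open Polynomial

/-- The companion matrix of a monic polynomial of degree `n`. -/
def companion {F : Type*} [Field F] (n : ℕ) (p : Polynomial F) :
    Matrix (Fin n) (Fin n) F := fun i j =>
  if (j : ℕ) = n - 1 then -(p.coeff i)
  else if (i : ℕ) = (j : ℕ) + 1 then 1 else 0

/-- `l` is the list of invariant factors of the square matrix `A`. -/
def IsInvFactors {F : Type*} [Field F] {m : Type*} [Fintype m] [DecidableEq m]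
    (A : Matrix m m F) (l : List (Polynomial F)) : Prop :=
  (∀ p ∈ l, p.Monic) ∧ l.Chain' (fun a b => b ∣ a) ∧
  ∃ e : m ≃ (Σ i : Fin l.length, Fin ((l.get i).natDegree)),
  ∃ P : (Matrix m m F)ˣ,
    A = (P : Matrix m m F) *
        (Matrix.reindex e.symm e.symm
          (Matrix.blockDiagonal' fun i => companion ((l.get i).natDegree) (l.get i))) *
        ((↑P⁻¹ : Matrix m m F))

/-- `T`-cyclic decomposition of the subspace `W`: it is the direct sum of the cyclic subspaces
generated by `v 0, …, v (N - 1)`, where the annihilator of `v i` is generated by `s i`. -/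
structure CyclicDecomp {F V : Type*} [Field F] [AddCommGroup V] [Module F V]
    (T : Module.End F V) (W : Submodule F V) (N : ℕ) (s : ℕ → F[X]) (v : ℕ → V) : Prop where
  ne_zero : ∀ i < N, s i ≠ 0
  mem_iff : ∀ x, x ∈ W ↔ ∃ q : ℕ → F[X], x = ∑ i ∈ Finset.range N, aeval T (q i) (v i)
  sum_eq_zero_iff : ∀ q : ℕ → F[X],
    ∑ i ∈ Finset.range N, aeval T (q i) (v i) = 0 ↔ ∀ i < N, s i ∣ q i

section CyclicDecomp

variable {F V : Type*} [Field F] [AddCommGroup V] [Module F V]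

theorem aeval_mul_apply (T : Module.End F V) (p q : F[X]) (x : V) :
    aeval T (p * q) x = aeval T p (aeval T q x) := by
  rw [map_mul, Module.End.mul_apply]

theorem aeval_apply_eq_zero_of_dvd {T : Module.End F V} {p q : F[X]} {x : V} (h : p ∣ q)
    (hp : aeval T p x = 0) : aeval T q x = 0 := by
  obtain ⟨c, rfl⟩ := h
  rw [mul_comm, aeval_mul_apply, hp, map_zero]

theorem aeval_apply_mem {T : Module.End F V} {W : Submodule F V} (hW : ∀ x ∈ W, T x ∈ W)
    (p : F[X]) {x : V} (hx : x ∈ W) : aeval T p x ∈ W := by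
  induction p using Polynomial.induction_on' with
  | add p q hp hq => rw [map_add, LinearMap.add_apply]; exact W.add_mem hp hq
  | monomial n a =>
    rw [aeval_monomial, Module.End.mul_apply, Module.algebraMap_end_apply]
    refine W.smul_mem _ ?_
    induction n with
    | zero => simpa
    | succ n ih => rw [pow_succ', Module.End.mul_apply]; exact hW _ ih

/-- Evaluation of tuples of polynomials of degree less than `d i` on the vectors `v i`. -/
noncomputable def evalTuple (T : Module.End F V) (N : ℕ) (d : ℕ → ℕ) (v : ℕ → V) :
    (∀ i : Fin N, degreeLT F (d i)) →ₗ[F] V :=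
  ∑ i : Fin N, (LinearMap.applyₗ (v i) ∘ₗ (aeval T).toLinearMap ∘ₗ (degreeLT F (d i)).subtype) ∘ₗ
    LinearMap.proj i

theorem evalTuple_apply (T : Module.End F V) (N : ℕ) (d : ℕ → ℕ) (v : ℕ → V)
    (q : ∀ i : Fin N, degreeLT F (d i)) :
    evalTuple T N d v q = ∑ i : Fin N, aeval T (q i : F[X]) (v i) := by
  simp [evalTuple]

theorem finrank_tuple (N : ℕ) (d : ℕ → ℕ) :
    Module.finrank F (∀ i : Fin N, degreeLT F (d i)) = ∑ i ∈ Finset.range N, d i := by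
  have (n : ℕ) : Module.Free F (degreeLT F n) := inferInstance
  have (n : ℕ) : Module.Finite F (degreeLT F n) := Module.Finite.equiv (degreeLTEquiv F n).symm
  rw [Module.finrank_pi_fintype, Finset.sum_range]
  exact Finset.sum_congr rfl fun i _ => by
    rw [(degreeLTEquiv F (d i)).finrank_eq, Module.finrank_fin_fun]

theorem mod_mem_degreeLT (q : F[X]) {s : F[X]} (hs : s ≠ 0) :
    q % s ∈ degreeLT F s.natDegree := by
  rw [mem_degreeLT, ← degree_eq_natDegree hs]
  exact EuclideanDomain.mod_lt q hs

theorem eq_zero_of_dvd_of_mem_degreeLT {q s : F[X]} (hq : q ∈ degreeLT F s.natDegree)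
    (h : s ∣ q) : q = 0 := by
  by_contra h0
  rw [mem_degreeLT, degree_eq_natDegree h0] at hq
  exact absurd (natDegree_le_of_dvd h h0) (by exact_mod_cast hq.not_ge)

theorem aeval_mod_apply {T : Module.End F V} {s : F[X]} {x : V} (hs : aeval T s x = 0)
    (q : F[X]) : aeval T (q % s) x = aeval T q x := by
  conv_rhs => rw [← EuclideanDomain.mod_add_div q s]
  rw [map_add, LinearMap.add_apply, mul_comm, aeval_mul_apply, hs, map_zero, add_zero]

theorem range_evalTuple {T : Module.End F V} {N : ℕ} {s : ℕ → F[X]} {v : ℕ → V}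
    {W : Submodule F V} (h0 : ∀ i < N, s i ≠ 0) (hann : ∀ i < N, aeval T (s i) (v i) = 0)
    (hW : ∀ x, x ∈ W ↔ ∃ q : ℕ → F[X], x = ∑ i ∈ Finset.range N, aeval T (q i) (v i)) :
    LinearMap.range (evalTuple T N (fun i => (s i).natDegree) v) = W := by
  ext x
  rw [hW, LinearMap.mem_range]
  constructor
  · rintro ⟨q, rfl⟩
    refine ⟨fun i => if h : i < N then q ⟨i, h⟩ else 0, ?_⟩
    rw [evalTuple_apply, Finset.sum_range]
    simp
  · rintro ⟨q, rfl⟩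
    refine ⟨fun i => ⟨q i % s i, mod_mem_degreeLT _ (h0 i i.2)⟩, ?_⟩
    rw [evalTuple_apply, Finset.sum_range]
    exact Finset.sum_congr rfl fun i _ => aeval_mod_apply (hann i i.2) _

/-- Cyclic subspaces spanning `W` whose annihilators have the right total degree decompose `W`. -/
theorem CyclicDecomp.of_finrank {T : Module.End F V} {N : ℕ} {s : ℕ → F[X]} {v : ℕ → V}
    {W : Submodule F V} (h0 : ∀ i < N, s i ≠ 0) (hann : ∀ i < N, aeval T (s i) (v i) = 0)
    (hW : ∀ x, x ∈ W ↔ ∃ q : ℕ → F[X], x = ∑ i ∈ Finset.range N, aeval T (q i) (v i))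
    (hrank : ∑ i ∈ Finset.range N, (s i).natDegree = Module.finrank F W) :
    CyclicDecomp T W N s v := by
  refine ⟨h0, hW, fun q => ⟨fun hq => ?_, fun hq => ?_⟩⟩
  · have (n : ℕ) : Module.Finite F (degreeLT F n) := Module.Finite.equiv (degreeLTEquiv F n).symm
    have hr := LinearMap.finrank_range_add_finrank_ker
      (evalTuple T N (fun i => (s i).natDegree) v)
    rw [range_evalTuple h0 hann hW, finrank_tuple N fun i => (s i).natDegree, hrank] at hr
    have hk : LinearMap.ker (evalTuple T N (fun i => (s i).natDegree) v) = ⊥ :=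
      Submodule.finrank_eq_zero.mp (by omega)
    rw [LinearMap.ker_eq_bot'] at hk
    have := hk (fun i => ⟨q i % s i, mod_mem_degreeLT _ (h0 i i.2)⟩) (by
      rw [evalTuple_apply, ← hq, Finset.sum_range]
      exact Finset.sum_congr rfl fun i _ => aeval_mod_apply (hann i i.2) _)
    intro i hi
    have h := congrArg Subtype.val (congrFun this ⟨i, hi⟩)
    exact (EuclideanDomain.mod_eq_zero).mp h
  · exact Finset.sum_eq_zero fun i hi => aeval_apply_eq_zero_of_dvd
      (hq i (Finset.mem_range.mp hi)) (hann i (Finset.mem_range.mp hi))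

namespace CyclicDecomp

variable {T : Module.End F V} {W : Submodule F V} {N : ℕ} {s : ℕ → F[X]} {v : ℕ → V}

theorem aeval_eq_zero_iff (h : CyclicDecomp T W N s v) {i : ℕ} (hi : i < N) (q : F[X]) :
    aeval T q (v i) = 0 ↔ s i ∣ q := by
  have := h.sum_eq_zero_iff (Pi.single i q)
  rw [Finset.sum_eq_single_of_mem i (Finset.mem_range.mpr hi)] at this
  · rw [Pi.single_eq_same] at this
    rw [this]
    refine ⟨fun H => by simpa using H i hi, fun H j _ => ?_⟩
    rcases eq_or_ne j i with rfl | hj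
    · simpa using H
    · simp [hj]
  · intro j _ hj
    simp [hj]

theorem ann (h : CyclicDecomp T W N s v) : ∀ i < N, aeval T (s i) (v i) = 0 :=
  fun _ hi => (h.aeval_eq_zero_iff hi _).mpr dvd_rfl

theorem vec_mem (h : CyclicDecomp T W N s v) {i : ℕ} (hi : i < N) : v i ∈ W := by
  rw [h.mem_iff]
  refine ⟨Pi.single i 1, ?_⟩
  rw [Finset.sum_eq_single_of_mem i (Finset.mem_range.mpr hi)]
  · simp
  · intro j _ hj
    simp [hj]

theorem finrank_eq (h : CyclicDecomp T W N s v) :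
    Module.finrank F W = ∑ i ∈ Finset.range N, (s i).natDegree := by
  rw [← range_evalTuple h.ne_zero h.ann h.mem_iff, LinearMap.finrank_range_of_inj,
    finrank_tuple N fun i => (s i).natDegree]
  rw [← LinearMap.ker_eq_bot, LinearMap.ker_eq_bot']
  intro q hq
  rw [evalTuple_apply] at hq
  have := (h.sum_eq_zero_iff fun i => if h : i < N then q ⟨i, h⟩ else 0).mp (by
    rw [Finset.sum_range]
    simpa using hq)
  ext1 i
  have hi := this i i.2
  rw [dif_pos i.2] at hi
  exact Subtype.ext (eq_zero_of_dvd_of_mem_degreeLT (q i).2 hi)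

open Classical in
/-- The kernel of `g(T)` on a cyclic sum is a cyclic sum with annihilators `gcd g (s i)`. -/
theorem ker_inf (h : CyclicDecomp T W N s v) (g : F[X]) :
    CyclicDecomp T (LinearMap.ker (aeval T g) ⊓ W) N (fun i => EuclideanDomain.gcd g (s i))
      (fun i => aeval T (s i / EuclideanDomain.gcd g (s i)) (v i)) := by
  have hd0 (i : ℕ) (hi : i < N) : EuclideanDomain.gcd g (s i) ≠ 0 := fun h0 =>
    h.ne_zero i hi (EuclideanDomain.gcd_eq_zero_iff.mp h0).2
  have hd (i : ℕ) (hi : i < N) :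
      EuclideanDomain.gcd g (s i) * (s i / EuclideanDomain.gcd g (s i)) = s i :=
    EuclideanDomain.mul_div_cancel' (hd0 i hi) (EuclideanDomain.gcd_dvd_right g (s i))
  refine ⟨hd0, fun x => ⟨?_, ?_⟩, fun q => ?_⟩
  · rintro ⟨hx, hxW⟩
    obtain ⟨p, rfl⟩ := (h.mem_iff x).mp hxW
    rw [SetLike.mem_coe, LinearMap.mem_ker, map_sum] at hx
    simp only [← aeval_mul_apply] at hx
    have hdvd : ∀ i, i < N → ∃ q, p i = q * (s i / EuclideanDomain.gcd g (s i)) := by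
      intro i hi
      have hs := (h.sum_eq_zero_iff _).mp hx i hi
      refine exists_eq_mul_left_of_dvd ((mul_dvd_mul_iff_left (hd0 i hi)).mp ?_)
      rw [hd i hi, EuclideanDomain.gcd_eq_gcd_ab g (s i), add_mul]
      exact dvd_add (by rw [mul_right_comm]; exact hs.mul_right _)
        ((dvd_mul_right _ _).mul_right _)
    choose! q hq using hdvd
    refine ⟨q, Finset.sum_congr rfl fun i hi => ?_⟩
    rw [← aeval_mul_apply, ← hq i (Finset.mem_range.mp hi)]
  · rintro ⟨q, rfl⟩
    simp only [← aeval_mul_apply]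
    refine ⟨?_, (h.mem_iff _).mpr ⟨_, rfl⟩⟩
    rw [SetLike.mem_coe, LinearMap.mem_ker, map_sum]
    simp only [← aeval_mul_apply]
    rw [h.sum_eq_zero_iff]
    intro i hi
    conv_lhs => rw [← hd i hi]
    rw [← mul_assoc]
    exact mul_dvd_mul ((EuclideanDomain.gcd_dvd_left g (s i)).mul_right _) dvd_rfl
  · simp only [← aeval_mul_apply]
    rw [h.sum_eq_zero_iff]
    refine forall₂_congr fun i hi => ?_
    have key : ∀ {d c t : F[X]}, d * c = t → t ≠ 0 → (t ∣ q i * c ↔ d ∣ q i) := by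
      rintro d c _ rfl h0
      exact mul_dvd_mul_iff_right (right_ne_zero_of_mul h0)
    exact key (hd i hi) (h.ne_zero i hi)

end CyclicDecomp

theorem exists_monic_dvd_iff {s : F[X]} (hs : s ≠ 0) :
    ∃ t : F[X], t.Monic ∧ (∀ q, t ∣ q ↔ s ∣ q) ∧ t.natDegree = s.natDegree := by
  classical
  exact ⟨normalize s, Polynomial.monic_normalize hs, fun q => normalize_dvd_iff,
    natDegree_eq_of_degree_eq degree_normalize⟩

theorem exists_annihilator [FiniteDimensional F V] (T : Module.End F V) (x : V) :
    ∃ s : F[X], s.Monic ∧ ∀ q, aeval T q x = 0 ↔ s ∣ q := by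
  let I : Ideal F[X] :=
    { carrier := {q | aeval T q x = 0}
      add_mem' := fun {p q} hp hq => by
        simp only [Set.mem_ofPred_eq] at hp hq ⊢
        rw [map_add, LinearMap.add_apply, hp, hq, add_zero]
      zero_mem' := by simp
      smul_mem' := fun c q hq => by
        simp only [Set.mem_ofPred_eq] at hq ⊢
        rw [smul_eq_mul, aeval_mul_apply, hq, map_zero] }
  have hI (q : F[X]) : aeval T q x = 0 ↔ Submodule.IsPrincipal.generator I ∣ q := by
    rw [← Submodule.IsPrincipal.mem_iff_generator_dvd]
    rfl
  have h0 : Submodule.IsPrincipal.generator I ≠ 0 := fun h0 => by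
    have := (hI (minpoly F T)).mp (by rw [minpoly.aeval, LinearMap.zero_apply])
    rw [h0, zero_dvd_iff] at this
    exact minpoly.ne_zero (Algebra.IsIntegral.isIntegral T) this
  obtain ⟨t, ht, htd, -⟩ := exists_monic_dvd_iff h0
  exact ⟨t, ht, fun q => by rw [hI, htd]⟩

theorem dvd_of_prime_pow_dvd {a b : F[X]} (hb : b ≠ 0)
    (h : ∀ (p : F[X]) (k : ℕ), Prime p → p ^ k ∣ b → p ^ k ∣ a) : b ∣ a := by
  revert hb h
  refine UniqueFactorizationMonoid.induction_on_coprime b (fun h0 _ => absurd rfl h0)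
    (fun hx _ _ => hx.dvd) (fun k hp _ h => h _ k hp dvd_rfl) ?_
  intro x y hxy hx hy h0 h
  refine IsCoprime.mul_dvd hxy.isCoprime
    (hx (left_ne_zero_of_mul h0) fun p k hp hd => h p k hp (hd.mul_right _))
    (hy (right_ne_zero_of_mul h0) fun p k hp hd => h p k hp (hd.mul_left _))

/-- Some vector of a `T`-invariant subspace `W` has the annihilator of all of `W`. -/
theorem exists_maximal_annihilator [FiniteDimensional F V] {T : Module.End F V}
    {W : Submodule F V} (hW : ∀ x ∈ W, T x ∈ W) :
    ∃ x ∈ W, ∃ s : F[X], s.Monic ∧ (∀ q, aeval T q x = 0 ↔ s ∣ q) ∧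
      ∀ y ∈ W, aeval T s y = 0 := by
  let D : Set ℕ := {d | ∃ x ∈ W, ∃ s : F[X], s.Monic ∧ (∀ q, aeval T q x = 0 ↔ s ∣ q) ∧
    s.natDegree = d}
  have hbdd : BddAbove D := by
    refine ⟨(minpoly F T).natDegree, ?_⟩
    rintro _ ⟨x, -, s, -, hs, rfl⟩
    refine natDegree_le_of_dvd ((hs _).mp ?_)
      (minpoly.ne_zero (Algebra.IsIntegral.isIntegral T))
    rw [minpoly.aeval, LinearMap.zero_apply]
  have hne : D.Nonempty := by
    obtain ⟨s, hs⟩ := exists_annihilator T 0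
    exact ⟨_, 0, W.zero_mem, s, hs.1, hs.2, rfl⟩
  obtain ⟨x, hx, a, ha, hxa, hmax⟩ := Nat.sSup_mem hne hbdd
  refine ⟨x, hx, a, ha, hxa, fun y hy => ?_⟩
  obtain ⟨b, hb, hyb⟩ := exists_annihilator T y
  rw [hyb]
  refine dvd_of_prime_pow_dvd hb.ne_zero fun p k hp hpb => ?_
  by_contra hpa
  obtain ⟨b', rfl⟩ := hpb
  obtain ⟨j, a', ha', rfl⟩ := WfDvdMonoid.max_power_factor ha.ne_zero hp.irreducible
  have hjk : j < k := by
    by_contra hjk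
    exact hpa ((pow_dvd_pow p (not_lt.mp hjk)).mul_right _)
  have hp0 : p ≠ 0 := hp.ne_zero
  have hb'0 : b' ≠ 0 := right_ne_zero_of_mul hb.ne_zero
  have ha'0 : a' ≠ 0 := right_ne_zero_of_mul ha.ne_zero
  have hv (q : F[X]) : aeval T q (aeval T (p ^ j) x) = 0 ↔ a' ∣ q := by
    rw [← aeval_mul_apply, hxa, mul_comm q, mul_dvd_mul_iff_left (pow_ne_zero _ hp0)]
  have hw (q : F[X]) : aeval T q (aeval T b' y) = 0 ↔ p ^ k ∣ q := by
    rw [← aeval_mul_apply, hyb, mul_dvd_mul_iff_right hb'0]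
  have hcop : IsCoprime a' (p ^ k) :=
    (((Prime.coprime_iff_not_dvd hp).mpr ha').symm).pow_right
  have hz (q : F[X]) : aeval T q (aeval T (p ^ j) x + aeval T b' y) = 0 ↔ a' * p ^ k ∣ q := by
    constructor
    · intro h
      have h1 : aeval T (p ^ k * q) (aeval T (p ^ j) x + aeval T b' y) = 0 := by
        rw [aeval_mul_apply, h, map_zero]
      rw [map_add, (hw _).mpr (dvd_mul_right _ _), add_zero, hv] at h1
      have h2 := hcop.dvd_of_dvd_mul_left h1
      rw [map_add, (hv _).mpr h2, zero_add, hw] at h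
      exact hcop.mul_dvd h2 h
    · intro h
      rw [map_add, (hv _).mpr (dvd_of_mul_right_dvd h), (hw _).mpr (dvd_of_mul_left_dvd h),
        add_zero]
  obtain ⟨t, ht, htd, hdeg⟩ := exists_monic_dvd_iff (mul_ne_zero ha'0 (pow_ne_zero k hp0))
  have hmem : (a' * p ^ k).natDegree ∈ D :=
    ⟨_, W.add_mem (aeval_apply_mem hW _ hx) (aeval_apply_mem hW _ hy), t, ht,
      fun q => by rw [hz, htd], hdeg⟩
  have hle := le_csSup hbdd hmem
  have hpos : 0 < p.natDegree := hp.irreducible.natDegree_pos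
  have hlt : j * p.natDegree < k * p.natDegree := Nat.mul_lt_mul_of_pos_right hjk hpos
  rw [← hmax, natDegree_mul ha'0 (pow_ne_zero _ hp0),
    natDegree_mul (pow_ne_zero _ hp0) ha'0, natDegree_pow, natDegree_pow] at hle
  omega

end CyclicDecomp

section Existence

variable {F V : Type*} [Field F] [AddCommGroup V] [Module F V]

/-- A cyclic subspace with maximal annihilator has an invariant complement. -/
theorem exists_invariant_complement [FiniteDimensional F V] {T : Module.End F V}
    {W : Submodule F V} (hW : ∀ x ∈ W, T x ∈ W) {x : V} (hx : x ∈ W) (hx0 : x ≠ 0) {s : F[X]}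
    (hs : s.Monic) (hxs : ∀ q, aeval T q x = 0 ↔ s ∣ q) (hWs : ∀ y ∈ W, aeval T s y = 0) :
    ∃ W' ≤ W, (∀ y ∈ W', T y ∈ W') ∧
      s.natDegree + Module.finrank F W' = Module.finrank F W ∧
      ∀ y ∈ W, ∃ q : F[X], ∃ z ∈ W', y = aeval T q x + z := by
  obtain ⟨k, hk⟩ : ∃ k, s.natDegree = k + 1 := by
    refine Nat.exists_eq_succ_of_ne_zero fun h0 => hx0 ?_
    have := (hxs 1).mpr (by rw [hs.natDegree_eq_zero.mp h0])
    simpa using this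
  let ev : F[X] →ₗ[F] V := LinearMap.applyₗ x ∘ₗ (aeval T).toLinearMap
  have hev (q : F[X]) : ev q = aeval T q x := rfl
  have hlow : ev (X ^ k) ∉ (degreeLT F k).map ev := by
    rintro ⟨q, hq, hqe⟩
    rw [SetLike.mem_coe, mem_degreeLT] at hq
    rw [← sub_eq_zero, ← map_sub, hev, hxs] at hqe
    have hd : (q - X ^ k).degree = (k : WithBot ℕ) := by
      rw [degree_sub_eq_right_of_degree_lt (by rwa [degree_X_pow]), degree_X_pow]
    have := degree_le_of_dvd hqe (by rintro h0; simp [h0] at hd)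
    rw [hd, degree_eq_natDegree hs.ne_zero, hk] at this
    exact absurd this (by norm_cast; omega)
  obtain ⟨φ, hφ, hφE⟩ := Submodule.exists_le_ker_of_notMem hlow
  let W' : Submodule F V :=
    { carrier := {y | y ∈ W ∧ ∀ q : F[X], φ (aeval T q y) = 0}
      add_mem' := fun {y z} hy hz => ⟨W.add_mem hy.1 hz.1, fun q => by
        rw [map_add, map_add, hy.2, hz.2, add_zero]⟩
      zero_mem' := ⟨W.zero_mem, fun q => by rw [map_zero, map_zero]⟩
      smul_mem' := fun c y hy => ⟨W.smul_mem c hy.1, fun q => by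
        rw [map_smul, map_smul, hy.2, smul_zero]⟩ }
  have hW'W : W' ≤ W := fun y hy => hy.1
  have hCW : (degreeLT F (k + 1)).map ev ≤ W := by
    rintro _ ⟨q, -, rfl⟩
    exact aeval_apply_mem hW q hx
  have hfin (n : ℕ) : Module.Finite F (degreeLT F n) :=
    Module.Finite.equiv (degreeLTEquiv F n).symm
  have hCrank : Module.finrank F ((degreeLT F (k + 1)).map ev) = k + 1 := by
    rw [← LinearMap.range_domRestrict, LinearMap.finrank_range_of_inj,
      (degreeLTEquiv F (k + 1)).finrank_eq, Module.finrank_fin_fun]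
    rw [← LinearMap.ker_eq_bot, LinearMap.ker_eq_bot']
    intro q hq
    refine Subtype.ext (eq_zero_of_dvd_of_mem_degreeLT (s := s) (hk.symm ▸ q.2) ?_)
    rwa [← hxs]
  have hdisj : (degreeLT F (k + 1)).map ev ⊓ W' = ⊥ := by
    rw [eq_bot_iff]
    rintro _ ⟨⟨q, hq, rfl⟩, hqW⟩
    rcases eq_or_ne q 0 with rfl | hq0
    · simp
    exfalso
    rw [SetLike.mem_coe, mem_degreeLT, degree_eq_natDegree hq0] at hq
    have hqk : q.natDegree ≤ k := Nat.lt_succ_iff.mp (by exact_mod_cast hq)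
    set p := X ^ (k - q.natDegree) * q with hp
    have hp0 : p ≠ 0 := mul_ne_zero (pow_ne_zero _ X_ne_zero) hq0
    have hpd : p.natDegree = k := by
      rw [hp, natDegree_mul (pow_ne_zero _ X_ne_zero) hq0, natDegree_X_pow]
      omega
    have h1 : φ (ev p) = 0 := by
      rw [hp, hev, aeval_mul_apply]
      exact hqW.2 _
    have h2 : φ (ev p.eraseLead) = 0 := by
      refine hφE (Submodule.mem_map_of_mem ?_)
      rw [mem_degreeLT, ← hpd, ← degree_eq_natDegree hp0]
      exact degree_eraseLead_lt hp0
    rw [← p.eraseLead_add_C_mul_X_pow, hpd, map_add, map_add, h2, zero_add, ← smul_eq_C_mul,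
      map_smul, map_smul, smul_eq_mul] at h1
    exact (mul_ne_zero (leadingCoeff_ne_zero.mpr hp0) hφ) h1
  have hW'rank : Module.finrank F W ≤ k + 1 + Module.finrank F W' := by
    let f : W →ₗ[F] (Fin (k + 1) → F) :=
      LinearMap.pi fun i => φ ∘ₗ (T ^ (i : ℕ)) ∘ₗ W.subtype
    have hker : (LinearMap.ker f).map W.subtype ≤ W' := by
      rintro _ ⟨y, hy, rfl⟩
      refine ⟨y.2, fun q => ?_⟩
      have hy' (i : ℕ) (hi : i < k + 1) : φ ((T ^ i) y) = 0 := congrFun hy ⟨i, hi⟩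
      rw [Submodule.subtype_apply, ← aeval_mod_apply (hWs _ y.2) q, aeval_eq_sum_range' (n := k + 1)]
      · rw [LinearMap.sum_apply, map_sum]
        refine Finset.sum_eq_zero fun i hi => ?_
        rw [LinearMap.smul_apply, map_smul, hy' i (Finset.mem_range.mp hi), smul_zero]
      · rw [← hk]
        exact natDegree_mod_lt q (by omega)
    have h1 := LinearMap.finrank_range_add_finrank_ker f
    have h2 := Submodule.finrank_le (LinearMap.range f)
    have h3 := Submodule.finrank_mono hker
    rw [Module.finrank_fin_fun] at h2
    rw [Submodule.finrank_map_subtype_eq] at h3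
    omega
  have hsum := Submodule.finrank_sup_add_finrank_inf_eq ((degreeLT F (k + 1)).map ev) W'
  rw [hdisj, finrank_bot, hCrank, add_zero] at hsum
  have hsup : (degreeLT F (k + 1)).map ev ⊔ W' = W :=
    Submodule.eq_of_le_of_finrank_le (sup_le hCW hW'W) (by omega)
  refine ⟨W', hW'W, fun y hy => ⟨hW y hy.1, fun q => ?_⟩, by rw [hk, ← hsum, hsup], ?_⟩
  · have := hy.2 (q * X)
    rwa [aeval_mul_apply, aeval_X] at this
  · intro y hy
    rw [← hsup, Submodule.mem_sup] at hy
    obtain ⟨_, ⟨q, -, rfl⟩, z, hz, rfl⟩ := hy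
    exact ⟨q, z, hz, rfl⟩

/-- Every invariant subspace has a cyclic decomposition whose annihilators form a divisibility
chain. -/
theorem exists_cyclicDecomp [FiniteDimensional F V] {T : Module.End F V}
    {W : Submodule F V} (hW : ∀ x ∈ W, T x ∈ W) :
    ∃ (N : ℕ) (s : ℕ → F[X]) (v : ℕ → V), CyclicDecomp T W N s v ∧ (∀ i, (s i).Monic) ∧
      (∀ i, s (i + 1) ∣ s i) ∧ ∀ i, N ≤ i → s i = 1 := by
  induction hn : Module.finrank F W using Nat.strong_induction_on generalizing W with
  | _ n ih =>
  subst hn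
  rcases eq_or_ne W ⊥ with rfl | hW0
  · refine ⟨0, fun _ => 1, fun _ => 0, ⟨by simp, by simp, by simp⟩, by simp, by simp, by simp⟩
  obtain ⟨x, hx, s, hs, hxs, hWs⟩ := exists_maximal_annihilator hW
  have hx0 : x ≠ 0 := by
    rintro rfl
    have h1 : s ∣ 1 := (hxs 1).mp (map_zero _)
    refine hW0 ((Submodule.eq_bot_iff W).mpr fun y hy => ?_)
    have := aeval_apply_eq_zero_of_dvd h1 (hWs y hy)
    simpa using this
  have hpos : 0 < s.natDegree := by
    refine Nat.pos_of_ne_zero fun h0 => hx0 ?_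
    have := (hxs 1).mpr (by rw [hs.natDegree_eq_zero.mp h0])
    simpa using this
  obtain ⟨W', hW'W, hW'T, hrank, hspan⟩ := exists_invariant_complement hW hx hx0 hs hxs hWs
  obtain ⟨N, r, u, hd, hr, hchain, hone⟩ := ih _ (by omega) hW'T rfl
  let s' : ℕ → F[X] := fun i => Nat.casesOn i s r
  let v' : ℕ → V := fun i => Nat.casesOn i x u
  have hann : ∀ i < N + 1, aeval T (s' i) (v' i) = 0
    | 0, _ => (hxs s).mpr dvd_rfl
    | i + 1, hi => hd.ann i (Nat.lt_of_succ_lt_succ hi)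
  have hmonic : ∀ i, (s' i).Monic
    | 0 => hs
    | i + 1 => hr i
  refine ⟨N + 1, s', v', .of_finrank (fun i _ => (hmonic i).ne_zero) hann (fun y => ⟨?_, ?_⟩) ?_,
    hmonic, ?_, ?_⟩
  · intro hy
    obtain ⟨q, z, hz, rfl⟩ := hspan y hy
    obtain ⟨p, rfl⟩ := (hd.mem_iff z).mp hz
    refine ⟨fun i => Nat.casesOn i q p, ?_⟩
    rw [Finset.sum_range_succ', add_comm]
    rfl
  · rintro ⟨q, rfl⟩
    rw [Finset.sum_range_succ']
    refine W.add_mem (hW'W ((hd.mem_iff _).mpr ⟨fun i => q (i + 1), rfl⟩)) ?_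
    exact aeval_apply_mem hW _ hx
  · rw [Finset.sum_range_succ', ← hrank, hd.finrank_eq, add_comm]
    rfl
  · rintro (_ | i)
    · rcases Nat.eq_zero_or_pos N with rfl | hN
      · change r 0 ∣ s
        rw [hone 0 le_rfl]
        exact one_dvd s
      · exact (hd.aeval_eq_zero_iff hN s).mp (hWs _ (hW'W (hd.vec_mem hN)))
    · exact hchain i
  · rintro (_ | i) hi
    · omega
    · exact hone i (by omega)

end Existence

section SquareZero

variable {F V : Type*} [Field F] [AddCommGroup V] [Module F V]

theorem dvd_of_le_of_chain {s : ℕ → F[X]} (hs : ∀ i, s (i + 1) ∣ s i) {i j : ℕ} (h : i ≤ j) :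
    s j ∣ s i := by
  induction h with
  | refl => exact dvd_rfl
  | step _ ih => exact (hs _).trans ih

open Classical in
/-- A divisibility chain `g` of monic polynomials prime to `X` is determined by the numbers
`∑ i, deg (gcd q (g i))` for `q` prime to `X`. -/
theorem chain_unique {N : ℕ} {g h : ℕ → F[X]} (hg : ∀ i, (g i).Monic) (hh : ∀ i, (h i).Monic)
    (hgc : ∀ i, g (i + 1) ∣ g i) (hhc : ∀ i, h (i + 1) ∣ h i)
    (hgX : ∀ i, IsCoprime (g i) X) (hhX : ∀ i, IsCoprime (h i) X)
    (hsum : ∀ q : F[X], IsCoprime q X →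
      ∑ i ∈ Finset.range N, (EuclideanDomain.gcd q (g i)).natDegree =
      ∑ i ∈ Finset.range N, (EuclideanDomain.gcd q (h i)).natDegree) :
    ∀ i < N, g i = h i := by
  have hgcd : ∀ {g h : ℕ → F[X]}, (∀ i, (g i).Monic) →
      (∀ i, g (i + 1) ∣ g i) → (∀ i, IsCoprime (g i) X) →
      (∀ q : F[X], IsCoprime q X →
        ∑ i ∈ Finset.range N, (EuclideanDomain.gcd q (g i)).natDegree =
        ∑ i ∈ Finset.range N, (EuclideanDomain.gcd q (h i)).natDegree) →
      ∀ i < N, (∀ j < i, g j = h j) →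
      (∑ j ∈ Finset.Ico i N, (g j).natDegree =
        ∑ j ∈ Finset.Ico i N, (EuclideanDomain.gcd (g i) (h j)).natDegree) := by
    intro g h hg hgc hgX hsum i hi hlt
    have h1 := hsum (g i) (hgX i)
    rw [← Finset.sum_range_add_sum_Ico _ hi.le, ← Finset.sum_range_add_sum_Ico _ hi.le,
      Finset.sum_congr rfl fun j hj => by rw [hlt j (Finset.mem_range.mp hj)],
      Nat.add_left_cancel_iff] at h1
    rw [← h1]
    refine Finset.sum_congr rfl fun j hj => ?_
    have hji := dvd_of_le_of_chain hgc (Finset.mem_Ico.mp hj).1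
    exact le_antisymm
      (natDegree_le_of_dvd (EuclideanDomain.dvd_gcd hji dvd_rfl) fun h0 =>
        (hg i).ne_zero (EuclideanDomain.gcd_eq_zero_iff.mp h0).1)
      (natDegree_le_of_dvd (EuclideanDomain.gcd_dvd_right _ _) (hg j).ne_zero)
  have hdvd : ∀ {p q : F[X]}, q.Monic → (EuclideanDomain.gcd p q).natDegree = q.natDegree →
      q ∣ p := by
    intro p q hq he
    have hd := EuclideanDomain.gcd_dvd_right p q
    have : Associated (EuclideanDomain.gcd p q) q :=
      associated_of_dvd_of_natDegree_le hd hq.ne_zero he.ge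
    exact this.symm.dvd.trans (EuclideanDomain.gcd_dvd_left p q)
  have hle : ∀ (p : F[X]) {q : F[X]}, q.Monic →
      (EuclideanDomain.gcd p q).natDegree ≤ q.natDegree := fun p q hq =>
    natDegree_le_of_dvd (EuclideanDomain.gcd_dvd_right _ _) hq.ne_zero
  intro i
  induction i using Nat.strong_induction_on with
  | _ i ih =>
  intro hi
  have hlt : ∀ j < i, g j = h j := fun j hj => ih j hj (hj.trans hi)
  have h1 := hgcd hg hgc hgX hsum i hi hlt
  have h2 := hgcd hh hhc hhX (fun q hq => (hsum q hq).symm) i hi fun j hj => (hlt j hj).symm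
  have h3 := Finset.sum_le_sum fun j (_ : j ∈ Finset.Ico i N) => hle (g i) (hh j)
  have h4 := Finset.sum_le_sum fun j (_ : j ∈ Finset.Ico i N) => hle (h i) (hg j)
  have hmem : i ∈ Finset.Ico i N := Finset.mem_Ico.mpr ⟨le_rfl, hi⟩
  have h5 := (Finset.sum_eq_sum_iff_of_le fun j (_ : j ∈ Finset.Ico i N) => hle (g i) (hh j)).mp
    (by omega) i hmem
  have h6 := (Finset.sum_eq_sum_iff_of_le fun j (_ : j ∈ Finset.Ico i N) => hle (h i) (hg j)).mp
    (by omega) i hmem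
  exact eq_of_monic_of_associated (hg i) (hh i)
    (associated_of_dvd_dvd (hdvd (hg i) h6) (hdvd (hh i) h5))

theorem exists_even_add_odd (q : F[X]) :
    ∃ e o : F[X], q = e.comp (X ^ 2) + X * o.comp (X ^ 2) := by
  induction q using Polynomial.induction_on' with
  | add p q hp hq =>
    obtain ⟨e, o, rfl⟩ := hp
    obtain ⟨e', o', rfl⟩ := hq
    exact ⟨e + e', o + o', by simp only [add_comp]; ring⟩
  | monomial n a =>
    obtain ⟨k, rfl | rfl⟩ := Nat.even_or_odd' n
    · exact ⟨C a * X ^ k, 0, by simp [← C_mul_X_pow_eq_monomial, pow_mul]⟩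
    · refine ⟨0, C a * X ^ k, ?_⟩
      simp only [← C_mul_X_pow_eq_monomial, zero_comp, mul_comp, C_comp, X_comp, pow_comp]
      ring

theorem aeval_comp_sq (T : Module.End F V) (p : F[X]) :
    aeval T (p.comp (X ^ 2)) = aeval (T ^ 2) p := by
  rw [aeval_comp, map_pow, aeval_X]

/-- On a subspace where the sum `T` of two square-zero operators is bijective, the annihilators
are the annihilators of `T ^ 2` on the kernel of the first one, evaluated at `X ^ 2`. -/
theorem CyclicDecomp.comp_sq {a b T : Module.End F V} (ha : a * a = 0) (hb : b * b = 0)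
    (hT : T = a + b) {W : Submodule F V} (haW : ∀ x ∈ W, a x ∈ W) (hbW : ∀ x ∈ W, b x ∈ W)
    (hinj : ∀ x ∈ W, T x = 0 → x = 0) (hsurj : ∀ x ∈ W, ∃ y ∈ W, T y = x)
    {N : ℕ} {r : ℕ → F[X]} {u : ℕ → V}
    (h : CyclicDecomp (T ^ 2) (LinearMap.ker a ⊓ W) N r u) :
    CyclicDecomp T W N (fun i => (r i).comp (X ^ 2)) u := by
  have ha' (x : V) : a (a x) = 0 := by rw [← Module.End.mul_apply, ha, LinearMap.zero_apply]
  have hb' (x : V) : b (b x) = 0 := by rw [← Module.End.mul_apply, hb, LinearMap.zero_apply]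
  have hT' (x : V) : T x = a x + b x := by rw [hT, LinearMap.add_apply]
  have hTW : ∀ x ∈ W, T x ∈ W := fun x hx => by
    rw [hT']; exact W.add_mem (haW x hx) (hbW x hx)
  have hsplit (e o : ℕ → F[X]) :
      ∑ i ∈ Finset.range N, aeval T ((e i).comp (X ^ 2) + X * (o i).comp (X ^ 2)) (u i) =
      ∑ i ∈ Finset.range N, aeval (T ^ 2) (e i) (u i) +
        T (∑ i ∈ Finset.range N, aeval (T ^ 2) (o i) (u i)) := by
    rw [map_sum, ← Finset.sum_add_distrib]
    refine Finset.sum_congr rfl fun i _ => ?_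
    rw [map_add, LinearMap.add_apply, aeval_mul_apply, aeval_X, aeval_comp_sq, aeval_comp_sq]
  refine ⟨fun i hi h0 => h.ne_zero i hi ?_, fun x => ⟨fun hx => ?_, ?_⟩, fun q => ?_⟩
  · rwa [← expand_eq_comp_X_pow, expand_eq_zero two_pos] at h0
  · obtain ⟨y, hy, rfl⟩ := hsurj x hx
    obtain ⟨w, hw, hwy⟩ := hsurj (b y) (hbW y hy)
    have haw : a w = 0 := by
      refine hinj _ (haW w hw) ?_
      have h1 : b (a w) = 0 := by
        have := hb' y
        rwa [← hwy, hT', map_add, hb', add_zero] at this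
      rw [hT', ha', h1, add_zero]
    obtain ⟨e, he⟩ := (h.mem_iff (a y)).mp ⟨ha' y, haW y hy⟩
    obtain ⟨o, ho⟩ := (h.mem_iff w).mp ⟨haw, hw⟩
    refine ⟨fun i => (e i).comp (X ^ 2) + X * (o i).comp (X ^ 2), ?_⟩
    rw [hsplit, ← he, ← ho, hwy, hT']
  · rintro ⟨q, rfl⟩
    exact W.sum_mem fun i hi => aeval_apply_mem hTW _ (h.vec_mem (Finset.mem_range.mp hi)).2
  · choose e o heo using fun i => exists_even_add_odd (q i)
    obtain rfl : q = fun i => (e i).comp (X ^ 2) + X * (o i).comp (X ^ 2) := funext heo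
    rw [hsplit]
    constructor
    · intro h0
      have hE := (h.mem_iff _).mpr ⟨e, rfl⟩
      have hO := (h.mem_iff _).mpr ⟨o, rfl⟩
      set x := ∑ i ∈ Finset.range N, aeval (T ^ 2) (e i) (u i) with hx
      set y := ∑ i ∈ Finset.range N, aeval (T ^ 2) (o i) (u i) with hy
      have hEa : a x = 0 := hE.1
      have hOa : a y = 0 := hO.1
      have hTy : T y = b y := by rw [hT', hOa, zero_add]
      have hxy : x = -b y := by rw [← hTy]; exact eq_neg_of_add_eq_zero_left h0
      have hx0 : x = 0 := by
        refine hinj x hE.2 ?_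
        rw [hT', hEa, zero_add, hxy, map_neg, hb', neg_zero]
      have hy0 : y = 0 := by
        refine hinj y hO.2 ?_
        rwa [hx0, zero_add] at h0
      intro i hi
      obtain ⟨c, hc⟩ := (h.sum_eq_zero_iff e).mp hx0 i hi
      obtain ⟨d, hd⟩ := (h.sum_eq_zero_iff o).mp hy0 i hi
      refine ⟨c.comp (X ^ 2) + X * d.comp (X ^ 2), ?_⟩
      simp only [hc, hd, mul_comp]
      ring
    · intro h0
      rw [← hsplit]
      refine Finset.sum_eq_zero fun i hi => aeval_apply_eq_zero_of_dvd
        (h0 i (Finset.mem_range.mp hi)) ?_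
      rw [aeval_comp_sq]
      exact h.ann i (Finset.mem_range.mp hi)

theorem sum_range_extend {N K : ℕ} (hNK : N ≤ K) {f : ℕ → ℕ} (hf : ∀ i, N ≤ i → f i = 0) :
    ∑ i ∈ Finset.range N, f i = ∑ i ∈ Finset.range K, f i :=
  Finset.sum_subset (Finset.range_mono hNK) fun i _ hi => hf i (by simpa using hi)

theorem natDegree_gcd_one [DecidableEq F[X]] (q : F[X]) :
    (EuclideanDomain.gcd q 1).natDegree = 0 :=
  natDegree_eq_zero_of_isUnit (isUnit_of_dvd_one (EuclideanDomain.gcd_dvd_right q 1))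

theorem natDegree_gcd_X_pow_mul [DecidableEq F[X]] {q : F[X]} (hq : IsCoprime q X) (k : ℕ)
    (g : F[X]) : (EuclideanDomain.gcd q (X ^ k * g)).natDegree =
      (EuclideanDomain.gcd q g).natDegree := by
  refine natDegree_eq_of_degree_eq (degree_eq_degree_of_associated (associated_of_dvd_dvd
    (EuclideanDomain.dvd_gcd (EuclideanDomain.gcd_dvd_left _ _) ?_)
    (EuclideanDomain.dvd_gcd (EuclideanDomain.gcd_dvd_left _ _)
      ((EuclideanDomain.gcd_dvd_right _ _).mul_left _))))
  have : IsCoprime (EuclideanDomain.gcd q (X ^ k * g)) (X ^ k) :=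
    (hq.of_isCoprime_of_dvd_left (EuclideanDomain.gcd_dvd_left _ _)).pow_right
  exact this.dvd_of_dvd_mul_left (EuclideanDomain.gcd_dvd_right _ _)

theorem isCoprime_X_of_not_dvd {q : F[X]} (h : ¬ X ∣ q) : IsCoprime q X :=
  ((prime_X.coprime_iff_not_dvd).mpr h).symm

/-- The invariant factors of a sum of two square-zero operators are, up to powers of `X`,
polynomials in `X ^ 2`. -/
theorem CyclicDecomp.eq_X_pow_mul_comp_sq [FiniteDimensional F V] {a b T : Module.End F V}
    (ha : a * a = 0) (hb : b * b = 0) (hT : T = a + b) {N : ℕ} {s : ℕ → F[X]} {v : ℕ → V}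
    (h : CyclicDecomp T ⊤ N s v) (hs : ∀ i, (s i).Monic) (hchain : ∀ i, s (i + 1) ∣ s i)
    (hone : ∀ i, N ≤ i → s i = 1) (i : ℕ) :
    ∃ (k : ℕ) (r : F[X]), s i = X ^ k * r.comp (X ^ 2) := by
  classical
  obtain ⟨m, hcompl, hm⟩ := ((T ^ 2).eventually_isCompl_ker_pow_range_pow.and
    (Filter.eventually_ge_atTop 1)).exists
  obtain ⟨m, rfl⟩ := Nat.exists_eq_add_of_le' hm
  set S := (T ^ 2) ^ (m + 1) with hS
  set W := LinearMap.range S with hWdef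
  have hT2 : T ^ 2 = a * b + b * a := by
    rw [hT, sq, add_mul, mul_add, mul_add, ha, hb]; abel
  have hac : Commute (T ^ 2) a := by
    rw [hT2, Commute, SemiconjBy, add_mul, mul_add, mul_assoc b a a, ha, ← mul_assoc a a b, ha,
      mul_assoc, zero_mul, mul_zero, zero_add, add_zero]
  have hbc : Commute (T ^ 2) b := by
    rw [hT2, Commute, SemiconjBy, add_mul, mul_add, mul_assoc a b b, hb, ← mul_assoc b b a, hb,
      mul_assoc, zero_mul, mul_zero, zero_add, add_zero]
  have hmaps {f : Module.End F V} (hf : Commute (T ^ 2) f) : ∀ x ∈ W, f x ∈ W := by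
    rintro _ ⟨y, rfl⟩
    refine ⟨f y, ?_⟩
    rw [← Module.End.mul_apply, ← Module.End.mul_apply, (hf.pow_left (m + 1)).eq]
  have hTc : Commute (T ^ 2) T := (Commute.refl T).pow_left 2
  have hST : S = T ^ (2 * m + 1) * T := by
    rw [hS, ← pow_mul, ← pow_succ]; congr 1
  have hinj : ∀ x ∈ W, T x = 0 → x = 0 := by
    intro x hx hx0
    refine Submodule.disjoint_def.mp hcompl.disjoint x ?_ hx
    rw [LinearMap.mem_ker, hST, Module.End.mul_apply, hx0, map_zero]
  have hsurj : ∀ x ∈ W, ∃ y ∈ W, T y = x := by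
    rintro _ ⟨y, rfl⟩
    obtain ⟨p, hp, _, ⟨z, rfl⟩, rfl⟩ := Submodule.mem_sup.mp
      (hcompl.sup_eq_top ▸ Submodule.mem_top : y ∈ LinearMap.ker S ⊔ LinearMap.range S)
    refine ⟨(T ^ (2 * m + 1)) (S z), hmaps (hTc.pow_right _) _ ⟨z, rfl⟩, ?_⟩
    rw [map_add, LinearMap.mem_ker.mp hp, zero_add, ← Module.End.mul_apply, ← pow_succ', pow_succ,
      ← hST]
  obtain ⟨N', r, u, hr, hrm, hrc, hr1⟩ := exists_cyclicDecomp (T := T ^ 2)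
    (W := LinearMap.ker a ⊓ W) (by
      rintro x ⟨hx, hxW⟩
      refine ⟨?_, hmaps (Commute.refl _) x hxW⟩
      rw [SetLike.mem_coe, LinearMap.mem_ker, ← Module.End.mul_apply, ← hac.eq,
        Module.End.mul_apply, LinearMap.mem_ker.mp hx, map_zero])
  have hd := hr.comp_sq ha hb hT (hmaps hac) (hmaps hbc) hinj hsurj
  have hker (q : F[X]) (hq : IsCoprime q X) :
      LinearMap.ker (aeval T q) ⊓ ⊤ = LinearMap.ker (aeval T q) ⊓ W := by
    refine le_antisymm (fun x hx => ⟨hx.1, ?_⟩) (inf_le_inf_left _ le_top)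
    obtain ⟨α, β, hαβ⟩ := hq.pow_right (n := 2 * (m + 1))
    refine ⟨aeval T β x, ?_⟩
    have hx1 : aeval T q x = 0 := hx.1
    have := congrArg (fun p => aeval T p x) hαβ
    simp only [map_add, LinearMap.add_apply, aeval_mul_apply, hx1, map_zero, zero_add, map_one,
      Module.End.one_apply] at this
    rw [← aeval_mul_apply, mul_comm, aeval_mul_apply, map_pow, aeval_X, pow_mul] at this
    exact this
  have hfac (i : ℕ) : ∃ (k : ℕ) (g : F[X]), ¬ X ∣ g ∧ s i = X ^ k * g :=
    WfDvdMonoid.max_power_factor (hs i).ne_zero irreducible_X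
  choose k g hgX hg using hfac
  have hgm (i : ℕ) : (g i).Monic := (monic_X_pow (k i)).of_mul_monic_left (hg i ▸ hs i)
  have hgcop (i : ℕ) : IsCoprime (g i) X := isCoprime_X_of_not_dvd (hgX i)
  have hNK := le_max_left N N'
  have hNK' := le_max_right N N'
  have hmain : ∀ i < max N N', g i = (r i).comp (X ^ 2) := by
    refine chain_unique hgm (fun i => ?_) (fun i => ?_) (fun i => ?_) hgcop (fun i => ?_) ?_
    · rw [← expand_eq_comp_X_pow]
      exact (hrm i).expand two_pos
    · refine ((hgcop (i + 1)).pow_right (n := k i)).dvd_of_dvd_mul_left ?_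
      rw [← hg i]
      exact (Dvd.intro_left _ (hg (i + 1)).symm).trans (hchain i)
    · obtain ⟨c, hc⟩ := hrc i
      exact ⟨c.comp (X ^ 2), by rw [hc, mul_comp]⟩
    · refine isCoprime_X_of_not_dvd fun hdvd => ?_
      rcases lt_or_ge i N' with hi | hi
      · obtain ⟨c, hc⟩ := hdvd
        have h0 := hd.ann i hi
        have hcm : aeval T c (u i) ∈ W := aeval_apply_mem (hmaps hTc) _ (hd.vec_mem hi)
        simp only [hc] at h0
        rw [aeval_mul_apply, aeval_X] at h0
        have h1 := (hd.aeval_eq_zero_iff hi c).mp (hinj _ hcm h0)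
        have h2 := hd.ne_zero i hi
        simp only [hc] at h1 h2
        have hc0 := right_ne_zero_of_mul h2
        have := natDegree_le_of_dvd h1 hc0
        rw [natDegree_X_mul hc0] at this
        omega
      · rw [hr1 i hi, one_comp] at hdvd
        exact not_isUnit_X (isUnit_of_dvd_one hdvd)
    · intro q hq
      have e1 := (h.ker_inf q).finrank_eq
      have e2 := (hd.ker_inf q).finrank_eq
      rw [hker q hq, e2, sum_range_extend hNK' fun i hi => by
        rw [hr1 i hi, one_comp, natDegree_gcd_one], sum_range_extend hNK fun i hi => by
        rw [hone i hi, natDegree_gcd_one]] at e1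
      rw [e1]
      exact Finset.sum_congr rfl fun i _ => by rw [hg i, natDegree_gcd_X_pow_mul hq]
  rcases lt_or_ge i N with hi | hi
  · exact ⟨k i, r i, by rw [← hmain i (hi.trans_le hNK), ← hg i]⟩
  · exact ⟨0, 1, by rw [hone i hi, one_comp, pow_zero, one_mul]⟩

theorem X_pow_mul_comp_sq_even_or_odd (k : ℕ) (r : F[X]) :
    (∃ q : F[X], X ^ k * r.comp (X ^ 2) = q.comp (X ^ 2)) ∨
      ∃ q : F[X], X ^ k * r.comp (X ^ 2) = X * q.comp (X ^ 2) := by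
  obtain ⟨j, rfl | rfl⟩ := Nat.even_or_odd' k
  · exact .inl ⟨X ^ j * r, by rw [mul_comp, pow_comp, X_comp, pow_mul]⟩
  · exact .inr ⟨X ^ j * r, by rw [mul_comp, pow_comp, X_comp]; ring⟩

end SquareZero

theorem CyclicDecomp.congr {F V : Type*} [Field F] [AddCommGroup V] [Module F V]
    {T : Module.End F V} {W : Submodule F V} {N : ℕ} {s s' : ℕ → F[X]} {v : ℕ → V}
    (h : CyclicDecomp T W N s v) (hs : ∀ i < N, s i = s' i) : CyclicDecomp T W N s' v :=
  ⟨fun i hi => hs i hi ▸ h.ne_zero i hi, h.mem_iff, fun q => (h.sum_eq_zero_iff q).trans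
    (forall₂_congr fun i hi => by rw [hs i hi])⟩

section Companion

variable {F V : Type*} [Field F] [AddCommGroup V] [Module F V]

theorem sum_companion_smul_of_lt {d : ℕ} (p : F[X]) (c : Fin d → V) {j : ℕ} (hj : j + 1 < d) :
    ∑ k, companion d p k ⟨j, by omega⟩ • c k = c ⟨j + 1, hj⟩ := by
  rw [Finset.sum_eq_single_of_mem ⟨j + 1, hj⟩ (Finset.mem_univ _)]
  · simp [companion, show j ≠ d - 1 by omega]
  · intro k _ hk
    have : (k : ℕ) ≠ j + 1 := fun h => hk (Fin.ext h)
    simp [companion, show j ≠ d - 1 by omega, this]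

theorem sum_companion_smul_last {d : ℕ} (p : F[X]) (c : Fin d → V) {j : Fin d}
    (hj : (j : ℕ) + 1 = d) :
    ∑ k, companion d p k j • c k = -∑ k : Fin d, p.coeff k • c k := by
  simp [companion, show (j : ℕ) = d - 1 by omega]

theorem aeval_monic_apply (T : Module.End F V) {p : F[X]} (hp : p.Monic) (x : V) :
    aeval T p x = ∑ k : Fin p.natDegree, p.coeff k • (T ^ (k : ℕ)) x + (T ^ p.natDegree) x := by
  rw [aeval_eq_sum_range, LinearMap.sum_apply, Finset.sum_range_succ, Finset.sum_range,
    hp.coeff_natDegree, one_smul]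
  simp

theorem pow_succ_apply_eq_sum_companion {T : Module.End F V} {p : F[X]} (hp : p.Monic) {x : V}
    (hx : aeval T p x = 0) (j : Fin p.natDegree) :
    (T ^ ((j : ℕ) + 1)) x = ∑ k, companion p.natDegree p k j • (T ^ (k : ℕ)) x := by
  rcases Nat.lt_or_ge (j + 1) p.natDegree with hj | hj
  · exact (sum_companion_smul_of_lt p (fun k : Fin p.natDegree => (T ^ (k : ℕ)) x) hj).symm
  · have hj' : (j : ℕ) + 1 = p.natDegree := by omega
    rw [sum_companion_smul_last p (fun k : Fin p.natDegree => (T ^ (k : ℕ)) x) hj', hj']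
    rw [aeval_monic_apply T hp] at hx
    exact eq_neg_of_add_eq_zero_right hx

theorem exists_cyclic_of_companion {T : Module.End F V} {p : F[X]} (hp : p.Monic)
    (c : Fin p.natDegree → V) (hc : ∀ j, T (c j) = ∑ k, companion p.natDegree p k j • c k) :
    ∃ x, aeval T p x = 0 ∧ ∀ j : Fin p.natDegree, c j = (T ^ (j : ℕ)) x := by
  rcases Nat.eq_zero_or_pos p.natDegree with hd | hd
  · exact ⟨0, map_zero _, fun j => absurd j.2 (by omega)⟩
  have hpow : ∀ (j : ℕ) (hj : j < p.natDegree), c ⟨j, hj⟩ = (T ^ j) (c ⟨0, hd⟩) := by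
    intro j
    induction j with
    | zero => intro _; simp
    | succ j ih =>
      intro hj
      rw [pow_succ', Module.End.mul_apply, ← ih (by omega), hc, sum_companion_smul_of_lt p c hj]
  refine ⟨c ⟨0, hd⟩, ?_, fun j => hpow j j.2⟩
  have hlast := hc ⟨p.natDegree - 1, by omega⟩
  rw [sum_companion_smul_last p c (Nat.sub_add_cancel hd), hpow, ← Module.End.mul_apply,
    ← pow_succ', Nat.sub_add_cancel hd] at hlast
  rw [aeval_monic_apply T hp, hlast]
  simp only [← hpow _ (Fin.is_lt _), Fin.eta, add_neg_cancel]

end Companion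

section Matrix

variable {F : Type*} [Field F] {n : ℕ}

open Matrix

theorem mul_blockDiagonal_companion_col {l : List F[X]}
    (e : Fin n ≃ (Σ i : Fin l.length, Fin ((l.get i).natDegree))) (P : Matrix (Fin n) (Fin n) F)
    (i : Fin l.length) (j : Fin (l.get i).natDegree) :
    (P * reindex e.symm e.symm
      (blockDiagonal' fun i => companion ((l.get i).natDegree) (l.get i))).col (e.symm ⟨i, j⟩) =
    ∑ k, companion (l.get i).natDegree (l.get i) k j • P.col (e.symm ⟨i, k⟩) := by
  ext a
  rw [Finset.sum_apply, col_apply, mul_apply, ← e.symm.sum_comp, Fintype.sum_sigma,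
    Finset.sum_eq_single_of_mem i (Finset.mem_univ _)]
  · refine Finset.sum_congr rfl fun k _ => ?_
    simp [blockDiagonal'_apply_eq, mul_comm]
  · intro i' _ hi'
    refine Finset.sum_eq_zero fun k _ => ?_
    simp [blockDiagonal'_apply_ne _ _ _ hi']

theorem sum_monomial_apply {V : Type*} [AddCommGroup V] [Module F V] (T : Module.End F V)
    {d : ℕ} (c : Fin d → F) (x : V) :
    aeval T (∑ j : Fin d, monomial (j : ℕ) (c j)) x = ∑ j : Fin d, c j • (T ^ (j : ℕ)) x := by
  simp [aeval_monomial, Module.algebraMap_end_apply]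

theorem IsInvFactors.exists_cyclicDecomp {M : Matrix (Fin n) (Fin n) F} {l : List F[X]}
    (h : IsInvFactors M l) :
    ∃ v, CyclicDecomp (toLin' M) ⊤ l.length (fun i => l.getD i 1) v := by
  obtain ⟨hmonic, -, e, P, hM⟩ := h
  have hMP : M * P = P * reindex e.symm e.symm
      (blockDiagonal' fun i => companion ((l.get i).natDegree) (l.get i)) := by
    rw [hM, Units.inv_mul_cancel_right]
  have hcyc (i : Fin l.length) := exists_cyclic_of_companion (T := toLin' M)
    (hmonic (l.get i) (l.get_mem i)) (fun j => (P : Matrix _ _ F).col (e.symm ⟨i, j⟩)) (fun j => by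
      rw [← mul_blockDiagonal_companion_col, ← hMP, toLin'_apply]
      rfl)
  choose x hx hpow using hcyc
  have hget (i : Fin l.length) : l.getD i 1 = l.get i := by simp
  refine ⟨fun i => if h : i < l.length then x ⟨i, h⟩ else 0, .of_finrank ?_ ?_ ?_ ?_⟩
  · intro i hi
    rw [hget ⟨i, hi⟩]
    exact (hmonic _ (l.get_mem _)).ne_zero
  · intro i hi
    rw [hget ⟨i, hi⟩, dif_pos hi]
    exact hx _
  · refine fun y => ⟨fun _ => ?_, fun _ => Submodule.mem_top⟩
    let w := ((P⁻¹ : (Matrix (Fin n) (Fin n) F)ˣ) : Matrix (Fin n) (Fin n) F) *ᵥ y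
    have hw : y = (P : Matrix (Fin n) (Fin n) F) *ᵥ w := by
      simp [w, mulVec_mulVec]
    refine ⟨fun i => if h : i < l.length then
      ∑ j : Fin (l.get ⟨i, h⟩).natDegree, monomial (j : ℕ) (w (e.symm ⟨⟨i, h⟩, j⟩)) else 0, ?_⟩
    rw [Finset.sum_range]
    simp only [Fin.is_lt, dif_pos, Fin.eta]
    simp_rw [sum_monomial_apply, ← hpow]
    rw [hw, mulVec_eq_sum, ← e.symm.sum_comp, Fintype.sum_sigma]
    simp [col]
  · rw [finrank_top, Module.finrank_fin_fun, Finset.sum_range]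
    simp_rw [hget]
    simpa using (Fintype.card_congr e).symm

theorem CyclicDecomp.isInvFactors {M : Matrix (Fin n) (Fin n) F} {l : List F[X]}
    {v : ℕ → Fin n → F} (h : CyclicDecomp (toLin' M) ⊤ l.length (fun i => l.getD i 1) v)
    (hmonic : ∀ p ∈ l, p.Monic) (hchain : l.IsChain fun a b => b ∣ a) : IsInvFactors M l := by
  have hget (i : Fin l.length) : l.getD i 1 = l.get i := by simp
  have hrank := h.finrank_eq
  rw [finrank_top, Module.finrank_fin_fun, Finset.sum_range] at hrank
  simp_rw [hget] at hrank
  let e : Fin n ≃ (Σ i : Fin l.length, Fin ((l.get i).natDegree)) :=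
    Fintype.equivOfCardEq (by simpa using hrank)
  let b : (Σ i : Fin l.length, Fin ((l.get i).natDegree)) → Fin n → F :=
    fun x => (toLin' M ^ (x.2 : ℕ)) (v x.1)
  have hb : LinearIndependent F b := by
    rw [Fintype.linearIndependent_iff]
    intro c hc
    rw [Fintype.sum_sigma] at hc
    have h0 := (h.sum_eq_zero_iff fun i => if h : i < l.length then
      ∑ j : Fin (l.get ⟨i, h⟩).natDegree, monomial (j : ℕ) (c ⟨⟨i, h⟩, j⟩) else 0).mp (by
        rw [Finset.sum_range]
        simp only [Fin.is_lt, dif_pos, Fin.eta]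
        simp_rw [sum_monomial_apply]
        exact hc)
    rintro ⟨i, j⟩
    have hi := h0 i i.2
    rw [hget, dif_pos i.2] at hi
    have hq := eq_zero_of_dvd_of_mem_degreeLT ?_ hi
    · have := congrArg (fun q => q.coeff j) hq
      simpa [coeff_monomial, Fin.val_inj] using this
    · refine Submodule.sum_mem _ fun k _ => ?_
      rw [mem_degreeLT]
      exact (degree_monomial_le _ _).trans_lt (by exact_mod_cast k.2)
  let P : Matrix (Fin n) (Fin n) F := Matrix.of fun a x => b (e x) a
  have hPu : IsUnit P := by
    rw [← linearIndependent_cols_iff_isUnit]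
    exact hb.comp e e.injective
  obtain ⟨P', hP'⟩ := hPu
  refine ⟨hmonic, hchain, e, P', ?_⟩
  rw [Units.eq_mul_inv_iff_mul_eq, hP']
  refine Matrix.ext_col fun x => ?_
  obtain ⟨⟨i, j⟩, rfl⟩ := e.symm.surjective x
  rw [mul_blockDiagonal_companion_col]
  have hcol (k : Fin (l.get i).natDegree) :
      P.col (e.symm ⟨i, k⟩) = (toLin' M ^ (k : ℕ)) (v i) := by
    change b (e (e.symm ⟨i, k⟩)) = _
    rw [Equiv.apply_symm_apply]
  simp_rw [hcol]
  have hann := h.ann i i.2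
  rw [hget] at hann
  rw [← pow_succ_apply_eq_sum_companion (hmonic _ (l.get_mem i)) hann j, pow_succ',
    Module.End.mul_apply, ← hcol, toLin'_apply]
  rfl

/-- A matrix has an invariant factor decomposition. -/
theorem exists_isInvFactors (M : Matrix (Fin n) (Fin n) F) : ∃ l, IsInvFactors M l := by
  obtain ⟨N, s, v, h, hs, hchain, -⟩ :=
    _root_.exists_cyclicDecomp (T := toLin' M) (W := ⊤) fun _ _ => Submodule.mem_top
  refine ⟨(List.range N).map s, CyclicDecomp.isInvFactors (v := v) ?_ ?_ ?_⟩
  · rw [List.length_map, List.length_range]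
    exact h.congr fun i hi => by simp [hi]
  · simp only [List.mem_map]
    rintro _ ⟨i, -, rfl⟩
    exact hs i
  · rw [List.isChain_iff_getElem]
    intro i hi
    simpa using hchain i

/-- A matrix that reverses a `Bool`-grading of its index set is a sum of two square-zero
matrices. -/
theorem exists_square_zero_add_of_grading {m : Type*} [Fintype m] [DecidableEq m]
    (A : Matrix m m F) (ε : m → Bool) (h : ∀ i j, A i j ≠ 0 → ε i ≠ ε j) :
    ∃ B C : Matrix m m F, B ^ 2 = 0 ∧ C ^ 2 = 0 ∧ A = B + C := by
  have key (t : Bool) : (Matrix.of fun i j => if ε j = t then A i j else 0) ^ 2 = 0 := by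
    ext i j
    rw [sq, mul_apply]
    refine Finset.sum_eq_zero fun k _ => ?_
    rw [of_apply, of_apply]
    by_cases hkj : A k j = 0
    · simp [hkj]
    · have := h k j hkj
      by_cases hj : ε j = t
      · rw [if_neg fun hk => this (hk.trans hj.symm), zero_mul]
      · rw [if_neg hj, mul_zero]
  refine ⟨_, _, key true, key false, ?_⟩
  ext i j
  cases hj : ε j <;> simp [hj]

theorem coeff_eq_zero_of_even_or_odd {p : F[X]}
    (hp : (∃ q : F[X], p = q.comp (X ^ 2)) ∨ ∃ q : F[X], p = X * q.comp (X ^ 2)) {i : ℕ}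
    (hi : (i + p.natDegree) % 2 = 1) : p.coeff i = 0 := by
  rcases hp with ⟨q, rfl⟩ | ⟨q, rfl⟩
  · rw [← expand_eq_comp_X_pow] at hi ⊢
    rw [natDegree_expand] at hi
    rw [coeff_expand two_pos, if_neg (by omega)]
  · rw [← expand_eq_comp_X_pow] at hi ⊢
    rcases eq_or_ne q 0 with rfl | hq
    · simp
    rw [natDegree_X_mul ((expand_ne_zero two_pos).mpr hq), natDegree_expand] at hi
    rcases i with _ | i
    · simp
    · rw [coeff_X_mul, coeff_expand two_pos, if_neg (by omega)]

theorem companion_ne_zero_parity {p : F[X]}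
    (hp : (∃ q : F[X], p = q.comp (X ^ 2)) ∨ ∃ q : F[X], p = X * q.comp (X ^ 2))
    {i j : Fin p.natDegree} (h : companion p.natDegree p i j ≠ 0) :
    ((i : ℕ) + j) % 2 = 1 := by
  unfold companion at h
  split_ifs at h with h1 h2
  · by_contra hij
    exact h (by rw [coeff_eq_zero_of_even_or_odd hp (by omega), neg_zero])
  · omega
  · exact absurd rfl h

theorem IsInvFactors.exists_square_zero_add {M : Matrix (Fin n) (Fin n) F} {l : List F[X]}
    (h : IsInvFactors M l) (hl : ∀ p ∈ l, (∃ q : F[X], p = q.comp (X ^ 2)) ∨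
      ∃ q : F[X], p = X * q.comp (X ^ 2)) :
    ∃ A B : Matrix (Fin n) (Fin n) F, A ^ 2 = 0 ∧ B ^ 2 = 0 ∧ M = A + B := by
  obtain ⟨-, -, e, P, rfl⟩ := h
  obtain ⟨B, C, hB, hC, hBC⟩ := exists_square_zero_add_of_grading (reindex e.symm e.symm
      (blockDiagonal' fun i => companion ((l.get i).natDegree) (l.get i)))
    (fun x => ((e x).2 : ℕ) % 2 == 0) (by
      intro x y hxy
      rw [reindex_apply, submatrix_apply, Equiv.symm_symm] at hxy
      generalize e x = x' at hxy ⊢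
      generalize e y = y' at hxy ⊢
      obtain ⟨i, a⟩ := x'
      obtain ⟨j, c⟩ := y'
      obtain rfl : i = j := by
        by_contra hij
        exact hxy (blockDiagonal'_apply_ne _ _ _ hij)
      rw [blockDiagonal'_apply_eq] at hxy
      have := companion_ne_zero_parity (hl _ (l.get_mem i)) hxy
      intro heq
      dsimp only at heq
      rw [Bool.eq_iff_iff, beq_iff_eq, beq_iff_eq] at heq
      omega)
  refine ⟨P.val * B * P⁻¹.val, P.val * C * P⁻¹.val, ?_, ?_, ?_⟩
  · rw [Units.conj_pow, hB, mul_zero, zero_mul]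
  · rw [Units.conj_pow, hC, mul_zero, zero_mul]
  · rw [hBC, mul_add, add_mul]

theorem getD_succ_dvd {l : List F[X]} (h : l.IsChain fun a b => b ∣ a) (i : ℕ) :
    l.getD (i + 1) 1 ∣ l.getD i 1 := by
  rcases Nat.lt_or_ge (i + 1) l.length with hi | hi
  · rw [List.getD_eq_getElem _ _ hi, List.getD_eq_getElem _ _ (by omega)]
    exact h.getElem i hi
  · rw [List.getD_eq_default _ _ hi]
    exact one_dvd _

theorem getD_monic {l : List F[X]} (h : ∀ p ∈ l, p.Monic) (i : ℕ) : (l.getD i 1).Monic := by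
  rcases Nat.lt_or_ge i l.length with hi | hi
  · rw [List.getD_eq_getElem _ _ hi]
    exact h _ (List.getElem_mem hi)
  · rw [List.getD_eq_default _ _ hi]
    exact monic_one

end Matrix

/-- A matrix is the sum of two square-zero matrices if and only if each of its
invariant factors is an even polynomial (a polynomial in `t²`) or an odd
polynomial (of the form `t·q(t²)`). -/
theorem sum_two_square_zero_iff_invFactors_even_or_odd (F : Type*) [Field F]
    (n : ℕ) (M : Matrix (Fin n) (Fin n) F) :
    (∃ A B : Matrix (Fin n) (Fin n) F, A ^ 2 = 0 ∧ B ^ 2 = 0 ∧ M = A + B) ↔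
      (∀ l : List (Polynomial F), IsInvFactors M l →
        ∀ p ∈ l, (∃ q : Polynomial F, p = q.comp (X ^ 2)) ∨
          (∃ q : Polynomial F, p = X * q.comp (X ^ 2))) := by
  constructor
  · rintro ⟨A, B, hA, hB, rfl⟩ l hl p hp
    obtain ⟨v, hv⟩ := hl.exists_cyclicDecomp
    obtain ⟨i, hi, rfl⟩ := List.getElem_of_mem hp
    obtain ⟨k, r, hkr⟩ := hv.eq_X_pow_mul_comp_sq (a := Matrix.toLin' A) (b := Matrix.toLin' B)
      (by rw [Module.End.mul_eq_comp, ← Matrix.toLin'_mul, ← sq, hA, map_zero])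
      (by rw [Module.End.mul_eq_comp, ← Matrix.toLin'_mul, ← sq, hB, map_zero]) (map_add _ _ _)
      (getD_monic hl.1) (getD_succ_dvd hl.2.1) (fun i hi => List.getD_eq_default _ _ hi) i
    rw [List.getD_eq_getElem _ _ hi] at hkr
    rw [hkr]
    exact X_pow_mul_comp_sq_even_or_odd k r
  · intro h
    obtain ⟨l, hl⟩ := exists_isInvFactors M
    exact hl.exists_square_zero_add (h l hl)
end

section
/- Over a field F of characteristic 2, a matrix A ∈ Mat_n(F) is the sum of two idempotent matrices if and only if for every eigenvalue λ of A in the algebraic closure of F with λ ∉ {0, 1}, all the Jordan cells of A attached to λ are even-sized. -/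
open Polynomial
open Module
open scoped DirectSum Matrix

section Rank

variable {K V : Type*} [Field K] [AddCommGroup V] [Module K V] [FiniteDimensional K V]

theorem finrank_range_pow_eq_add (N : End K V) (m : ℕ) :
    finrank K (LinearMap.range (N ^ m)) = finrank K (LinearMap.range (N ^ (m + 1))) +
      finrank K ↥(LinearMap.range (N ^ m) ⊓ LinearMap.ker N) := by
  have h := (N.domRestrict (LinearMap.range (N ^ m))).finrank_range_add_finrank_ker
  rw [LinearMap.range_domRestrict, LinearMap.ker_domRestrict] at h
  rw [← h, pow_succ', Module.End.mul_eq_comp, LinearMap.range_comp,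
    ← Submodule.finrank_map_subtype_eq, Submodule.map_comap_subtype]

/-- Either side says that `N` has no Jordan cell of size `m + 1` for the eigenvalue `0`. -/
theorem finrank_range_pow_add_eq_two_mul_iff (N : End K V) (m : ℕ) :
    finrank K (LinearMap.range (N ^ m)) + finrank K (LinearMap.range (N ^ (m + 2))) =
        2 * finrank K (LinearMap.range (N ^ (m + 1))) ↔
      ∀ y, (N ^ (m + 1)) y = 0 → ∃ z, (N ^ (m + 1)) z = (N ^ m) y := by
  have h₀ := finrank_range_pow_eq_add N m
  have h₁ := finrank_range_pow_eq_add N (m + 1)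
  have hle : LinearMap.range (N ^ (m + 1)) ⊓ LinearMap.ker N ≤
      LinearMap.range (N ^ m) ⊓ LinearMap.ker N := by
    refine inf_le_inf_right _ ?_
    rw [pow_succ, Module.End.mul_eq_comp]
    exact LinearMap.range_comp_le_range _ _
  have key : finrank K (LinearMap.range (N ^ m)) + finrank K (LinearMap.range (N ^ (m + 2))) =
        2 * finrank K (LinearMap.range (N ^ (m + 1))) ↔
      finrank K ↥(LinearMap.range (N ^ (m + 1)) ⊓ LinearMap.ker N) =
        finrank K ↥(LinearMap.range (N ^ m) ⊓ LinearMap.ker N) := by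
    rw [add_assoc m 1 1, one_add_one_eq_two] at h₁
    omega
  rw [key]
  constructor
  · intro h y hy
    have hmem : (N ^ m) y ∈ LinearMap.range (N ^ m) ⊓ LinearMap.ker N :=
      ⟨⟨y, rfl⟩, by rw [SetLike.mem_coe, LinearMap.mem_ker, ← Module.End.mul_apply, ← pow_succ', hy]⟩
    rw [← Submodule.eq_of_le_of_finrank_eq hle h] at hmem
    exact hmem.1
  · intro h
    rw [le_antisymm hle]
    rintro _ ⟨⟨y, rfl⟩, hy⟩
    exact ⟨h y (by rw [pow_succ', Module.End.mul_apply]; exact hy), hy⟩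

theorem Matrix.rank_pow_add_eq_two_mul_iff {n : ℕ} (N : Matrix (Fin n) (Fin n) K) (m : ℕ) :
    (N ^ m).rank + (N ^ (m + 2)).rank = 2 * (N ^ (m + 1)).rank ↔
      ∀ y, N ^ (m + 1) *ᵥ y = 0 → ∃ z, N ^ (m + 1) *ᵥ z = N ^ m *ᵥ y := by
  have hr (k : ℕ) : (N ^ k).rank = finrank K (LinearMap.range (Matrix.toLin' N ^ k)) := by
    rw [← Matrix.toLin'_pow]
    rfl
  rw [hr, hr, hr, finrank_range_pow_add_eq_two_mul_iff]
  simp only [← Matrix.toLin'_pow, Matrix.toLin'_apply]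

end Rank

theorem Matrix.add_self_eq_zero_of_charP_two {K : Type*} [Field K] [CharP K 2] {n : ℕ}
    (B : Matrix (Fin n) (Fin n) K) : B + B = 0 := by
  ext
  simp [CharTwo.add_self_eq_zero]

section Necessity

/-- If `A = P + Q` with `P` and `Q` idempotent in characteristic two, then
`A * P + P * A = A ^ 2 + A`. -/
theorem commutator_eq_of_idempotents {R : Type*} [Ring R] (two : ∀ x : R, x + x = 0) {P Q : R}
    (hP : P ^ 2 = P) (hQ : Q ^ 2 = Q) :
    (P + Q) * P + P * (P + Q) = (P + Q) ^ 2 + (P + Q) := by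
  have e : (P + Q) ^ 2 + (P + Q) = P ^ 2 + Q ^ 2 + P * Q + Q * P + P + Q := by noncomm_ring
  have e' : (P + Q) * P + P * (P + Q) = P ^ 2 + P ^ 2 + P * Q + Q * P := by noncomm_ring
  have e'' : P + Q + P * Q + Q * P + P + Q = (P + P) + (Q + Q) + P * Q + Q * P := by abel
  rw [e, e', hP, hQ, e'', two, two, add_zero]

theorem exists_pow_mulVec_eq_of_commutator {K : Type*} [Field K] [CharP K 2] {n : ℕ}
    {A P : Matrix (Fin n) (Fin n) K} (h : A * P + P * A = A ^ 2 + A) {lam : K} (h0 : lam ≠ 0)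
    (h1 : lam ≠ 1) (j : ℕ) (y : Fin n → K) (hy : (A - lam • 1) ^ (2 * j + 1) *ᵥ y = 0) :
    ∃ z, (A - lam • 1) ^ (2 * j + 1) *ᵥ z = (A - lam • 1) ^ (2 * j) *ᵥ y := by
  set N := A - lam • (1 : Matrix (Fin n) (Fin n) K) with hN
  have hA : A = N + lam • 1 := by rw [hN]; abel
  have two (B : Matrix (Fin n) (Fin n) K) := B.add_self_eq_zero_of_charP_two
  have hU : A ^ 2 + A = N ^ 2 + N + (lam ^ 2 + lam) • 1 := by
    have : A ^ 2 + A = N ^ 2 + N + (lam ^ 2 + lam) • 1 + (lam • N + lam • N) := by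
      rw [hA]
      simp only [pow_two, add_mul, mul_add, smul_mul_assoc, mul_smul_comm, one_mul, mul_one,
        add_smul, mul_smul, smul_add]
      abel
    rw [this, two, add_zero]
  have hNP : N * P = P * N + (A ^ 2 + A) := by
    have : N * P = (A * P + P * A) - P * A - lam • P := by
      rw [hN, sub_mul, smul_mul_assoc, one_mul]; abel
    rw [this, h, hN, mul_sub, mul_smul_comm, mul_one]
    have h2 : P * A - lam • P + (A ^ 2 + A) =
      (A ^ 2 + A) - P * A - lam • P + (P * A + P * A) := by abel
    rw [h2, two, add_zero]
  have hNU : Commute N (A ^ 2 + A) := by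
    rw [hU]
    exact ((Commute.refl N).pow_right 2 |>.add_right (Commute.refl N)).add_right
      ((Commute.one_right N).smul_right _)
  have hN2 : Commute (N ^ 2) P := by
    have : N ^ 2 * P = P * N ^ 2 + ((A ^ 2 + A) * N + (A ^ 2 + A) * N) := by
      rw [pow_two, mul_assoc, hNP, mul_add, ← mul_assoc, hNP, hNU.eq, add_mul, mul_assoc]; abel
    rw [Commute, SemiconjBy, this, two, add_zero]
  have hc : lam ^ 2 + lam ≠ 0 := by
    have : lam ^ 2 + lam = lam * (lam - 1) := by rw [CharTwo.sub_eq_add]; ring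
    rw [this]
    exact mul_ne_zero h0 (sub_ne_zero.2 h1)
  have hx : N *ᵥ (N ^ (2 * j) *ᵥ y) = 0 := by
    rw [Matrix.mulVec_mulVec, ← pow_succ', hy]
  refine ⟨(lam ^ 2 + lam)⁻¹ • (P *ᵥ y), ?_⟩
  have hcomm : N ^ (2 * j) * P = P * N ^ (2 * j) := by
    rw [pow_mul]; exact (hN2.pow_left j).eq
  rw [Matrix.mulVec_smul, pow_succ' N, Matrix.mulVec_mulVec, mul_assoc, hcomm, ← mul_assoc,
    ← Matrix.mulVec_mulVec, hNP, hU, Matrix.add_mulVec,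
    Matrix.add_mulVec, Matrix.add_mulVec, ← Matrix.mulVec_mulVec,
    pow_two N, ← Matrix.mulVec_mulVec _ N N, hx]
  simp [Matrix.smul_mulVec, hc]

end Necessity

section Sufficiency

/-- The multiplication by `X` on `M` is a sum of two idempotents; the first of them is `P`. -/
def HasIdempotentSplitting (F M : Type*) [Field F] [AddCommGroup M] [Module F M]
    [Module F[X] M] : Prop :=
  ∃ P : M →ₗ[F] M, (∀ m, P (P m) = P m) ∧
    ∀ m, (X : F[X]) • P m + P ((X : F[X]) • m) = (X ^ 2 + X : F[X]) • m

variable {F : Type*} [Field F]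

theorem HasIdempotentSplitting.of_equiv {M M' : Type*} [AddCommGroup M] [Module F M]
    [Module F[X] M] [IsScalarTower F F[X] M] [AddCommGroup M'] [Module F M']
    [Module F[X] M'] [IsScalarTower F F[X] M'] (f : M ≃ₗ[F[X]] M')
    (h : HasIdempotentSplitting F M') : HasIdempotentSplitting F M := by
  obtain ⟨P, hP, hX⟩ := h
  refine ⟨(f.restrictScalars F).symm.toLinearMap ∘ₗ P ∘ₗ (f.restrictScalars F).toLinearMap,
    fun m => ?_, fun m => ?_⟩
  · simp [hP]
  · apply f.injective
    simpa using hX (f m)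

theorem HasIdempotentSplitting.directSum {ι : Type*} {M : ι → Type*} [∀ i, AddCommGroup (M i)]
    [∀ i, Module F (M i)] [∀ i, Module F[X] (M i)]
    (h : ∀ i, HasIdempotentSplitting F (M i)) : HasIdempotentSplitting F (⨁ i, M i) := by
  choose P hP hX using h
  refine ⟨DirectSum.lmap P, fun m => ?_, fun m => ?_⟩
  · ext i
    simp [hP]
  · refine DFinsupp.ext fun i => ?_
    exact hX i (m i)

/-- On `F[X] / (f)` the derivation `(X ^ 2 + X) d/dX` is idempotent, whenever it is defined. -/
theorem HasIdempotentSplitting.quotient_span [CharP F 2] {f : F[X]}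
    (hf : f ∣ (X ^ 2 + X) * derivative f) :
    HasIdempotentSplitting F (F[X] ⧸ Submodule.span F[X] {f}) := by
  let D : F[X] →ₗ[F] F[X] := LinearMap.mulLeft F (X ^ 2 + X) ∘ₗ derivative
  have hDapp (g : F[X]) : D g = (X ^ 2 + X) * derivative g := rfl
  have two : (2 : F[X]) = 0 := CharTwo.two_eq_zero
  have hDD (g : F[X]) : D (D g) = D g := by
    have h2 : derivative (derivative g) = 0 := by
      ext k
      have h : (((k + 1) * (k + 1 + 1) : ℕ) : F) = 0 :=
        (CharP.cast_eq_zero_iff F 2 _).2 (Nat.even_mul_succ_self (k + 1)).two_dvd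
      push_cast at h
      simp only [coeff_derivative, coeff_zero]
      push_cast
      linear_combination g.coeff (k + 1 + 1) * h
    simp only [hDapp, derivative_mul, h2, derivative_add, derivative_X_pow, derivative_X]
    simp [CharTwo.two_eq_zero]
  let I := Submodule.span F[X] {f}
  have hI : I.restrictScalars F ≤ (I.restrictScalars F).comap D := by
    intro g hg
    have hg' : g ∈ I := hg
    obtain ⟨a, rfl⟩ := Submodule.mem_span_singleton.1 hg'
    suffices h : D (a • f) ∈ I from h
    refine Ideal.mem_span_singleton.2 ?_
    rw [hDapp, smul_eq_mul, derivative_mul, mul_add]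
    exact dvd_add ⟨(X ^ 2 + X) * derivative a, by ring⟩
      (by rw [mul_left_comm]; exact hf.mul_left a)
  refine ⟨Submodule.mapQ (I.restrictScalars F) (I.restrictScalars F) D hI, fun m => ?_, fun m => ?_⟩
  · obtain ⟨g, rfl⟩ := Submodule.Quotient.mk_surjective _ m
    exact congrArg (Submodule.Quotient.mk (p := I)) (hDD g)
  · obtain ⟨g, rfl⟩ := Submodule.Quotient.mk_surjective _ m
    refine congrArg (Submodule.Quotient.mk (p := I)) (?_ : X • D g + D (X • g) = (X ^ 2 + X) • g)
    simp only [hDapp, smul_eq_mul, derivative_mul, derivative_X]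
    linear_combination (X * (X ^ 2 + X) * derivative g) * two

theorem exists_idempotents_of_hasIdempotentSplitting [CharP F 2] {n : ℕ}
    {A : Matrix (Fin n) (Fin n) F}
    (h : HasIdempotentSplitting F (AEval' (Matrix.toLin' A))) :
    ∃ P Q : Matrix (Fin n) (Fin n) F, P ^ 2 = P ∧ Q ^ 2 = Q ∧ A = P + Q := by
  obtain ⟨p, hp, hX⟩ := h
  let o := AEval'.of (Matrix.toLin' A)
  let P := LinearMap.toMatrix' (o.symm.toLinearMap ∘ₗ p ∘ₗ o.toLinearMap)
  have hPv (v) : P *ᵥ v = o.symm (p (o v)) := by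
    rw [← Matrix.toLin'_apply]; simp [P]
  have hP : P * P = P := by
    refine Matrix.toLin'.injective (LinearMap.ext fun v => ?_)
    simp only [Matrix.toLin'_apply, ← Matrix.mulVec_mulVec, hPv]
    simp [hp]
  have hA : A * P + P * A = A * A + A := by
    refine Matrix.toLin'.injective (LinearMap.ext fun v => ?_)
    apply o.injective
    have := hX (o v)
    rw [Matrix.toLin'_apply, Matrix.toLin'_apply]
    simp only [← Matrix.mulVec_mulVec, hPv, Matrix.add_mulVec, map_add]
    have key (w) : o (A *ᵥ w) = (X : F[X]) • o w := by
      rw [AEval'.X_smul_of]; simp [o]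
    rw [key, key, key, key]
    simpa [add_smul, pow_two, mul_smul] using this
  have two (B : Matrix (Fin n) (Fin n) F) := B.add_self_eq_zero_of_charP_two
  refine ⟨P, P + A, by rw [pow_two, hP], ?_, ?_⟩
  · have : (P + A) ^ 2 = P * P + A * A + (A * P + P * A) := by noncomm_ring
    rw [this, hP, hA]
    have : P + A * A + (A * A + A) = P + A + (A * A + A * A) := by abel
    rw [this, two, add_zero]
  · rw [← add_assoc, two, zero_add]

end Sufficiency

section JordanCells

variable {F K : Type*} [Field F] [Field K] [Algebra F K] {n : ℕ}

theorem Module.AEval'.smul_of_toLin' (A : Matrix (Fin n) (Fin n) F) (q : F[X]) (v : Fin n → F) :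
    q • AEval'.of (Matrix.toLin' A) v = AEval'.of (Matrix.toLin' A) (aeval A q *ᵥ v) := by
  rw [AEval'.of, ← AEval.of_aeval_smul]
  congr 1
  change (aeval (Matrix.toLinAlgEquiv' A) q) v = _
  rw [aeval_algEquiv]
  rfl

theorem Matrix.aeval_map_algebraMap (A : Matrix (Fin n) (Fin n) F) (q : F[X]) :
    aeval (A.map (algebraMap F K)) (q.map (algebraMap F K)) =
      (aeval A q).map (algebraMap F K) := by
  have := Polynomial.map_aeval_eq_aeval_map (S := Matrix (Fin n) (Fin n) F)
    (U := Matrix (Fin n) (Fin n) K) (φ := algebraMap F K) (ψ := (algebraMap F K).mapMatrix)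
    (by ext r : 1; simp [Matrix.algebraMap_eq_diagonal, Matrix.diagonal_map]) q A
  exact this.symm

/-- A homomorphism to a cyclic torsion module extends to the base change. -/
theorem exists_extension_of_cyclic_quotient (A : Matrix (Fin n) (Fin n) F) (f : F[X])
    (φ : AEval' (Matrix.toLin' A) →ₗ[F[X]] F[X] ⧸ Submodule.span F[X] {f}) :
    ∃ ψ : AEval' (Matrix.toLin' (A.map (algebraMap F K))) →ₗ[K[X]]
        K[X] ⧸ Ideal.span {f.map (algebraMap F K)},
      ∀ v : Fin n → F, φ (AEval'.of _ v) = Ideal.Quotient.mk (Ideal.span {f}) 1 →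
        ψ (AEval'.of _ (algebraMap F K ∘ v)) = Ideal.Quotient.mk _ 1 := by
  let θ : F[X] ⧸ Ideal.span {f} →+* K[X] ⧸ Ideal.span {f.map (algebraMap F K)} :=
    Ideal.quotientMap _ (mapRingHom (algebraMap F K)) (by
      rw [Ideal.span_singleton_le_iff_mem, Ideal.mem_comap]
      exact Ideal.mem_span_singleton_self _)
  have hθ (g : F[X]) (x : F[X] ⧸ Ideal.span {f}) :
      θ (g • x) = g.map (algebraMap F K) • θ x := by
    obtain ⟨x, rfl⟩ := Ideal.Quotient.mk_surjective x
    change θ (Ideal.Quotient.mk _ (g * x)) = _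
    rw [map_mul, map_mul]
    simp only [θ, Ideal.quotientMap_mk]
    rfl
  let b (i : Fin n) : K[X] ⧸ Ideal.span {f.map (algebraMap F K)} :=
    θ (φ (AEval'.of _ (Pi.single i 1)))
  let ψ₀ : (Fin n → K) →ₗ[K] K[X] ⧸ Ideal.span {f.map (algebraMap F K)} :=
    Fintype.linearCombination K b
  have hψ₀ (v : Fin n → F) : ψ₀ (algebraMap F K ∘ v) = θ (φ (AEval'.of _ v)) := by
    have hv : v = ∑ i, v i • Pi.single i (1 : F) := by
      ext j; simp [Finset.sum_apply, Pi.single_apply]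
    conv_rhs => rw [hv]
    simp only [ψ₀, b, Fintype.linearCombination_apply, map_sum, map_smul, Function.comp]
    refine Finset.sum_congr rfl fun i _ => ?_
    rw [← AEval.C_smul, φ.map_smul, hθ, Polynomial.map_C]
    exact (algebraMap_smul K[X] (algebraMap F K (v i)) _).symm
  refine ⟨LinearMap.ofAEval _ ψ₀ fun v => ?_, fun v hv => ?_⟩
  · have hlin : ψ₀ ∘ₗ Matrix.toLin' (A.map (algebraMap F K)) =
        (Module.toModuleEnd K[X] _ (X : K[X])).restrictScalars K ∘ₗ ψ₀ := by
      refine LinearMap.pi_ext' fun j => LinearMap.ext_ring ?_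
      have hj : (Pi.single j 1 : Fin n → K) = algebraMap F K ∘ Pi.single j 1 := by
        ext i; simp [Pi.single_apply, apply_ite]
      simp only [LinearMap.comp_apply, LinearMap.single_apply, Matrix.toLin'_apply]
      have hA : A.map (algebraMap F K) *ᵥ (algebraMap F K ∘ Pi.single j 1) =
          algebraMap F K ∘ (A *ᵥ Pi.single j 1) :=
        funext fun i => (RingHom.map_mulVec _ _ _ i).symm
      rw [hj, hA, hψ₀, ← Matrix.toLin'_apply, ← AEval'.X_smul_of, φ.map_smul, hθ, map_X, ← hψ₀]
      rfl
    exact LinearMap.congr_fun hlin v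
  · change ψ₀ (algebraMap F K ∘ v) = _
    rw [hψ₀, hv]
    simp [θ]

theorem not_forall_exists_pow_mulVec_eq (B : Matrix (Fin n) (Fin n) K)
    {p : F[X]} (hp : Irreducible p) (hpd : derivative p ≠ 0) {m : ℕ}
    {ψ : AEval' (Matrix.toLin' B) →ₗ[K[X]] K[X] ⧸ Ideal.span {(p ^ (m + 1)).map (algebraMap F K)}}
    {w : Fin n → K}
    (hw : aeval B ((p ^ (m + 1)).map (algebraMap F K)) *ᵥ w = 0)
    (hψ : ψ (AEval'.of _ w) = Ideal.Quotient.mk _ 1) {lam : K} (hlam : aeval lam p = 0) :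
    ¬ ∀ y, (B - lam • 1) ^ (m + 1) *ᵥ y = 0 →
      ∃ z, (B - lam • 1) ^ (m + 1) *ᵥ z =
        (B - lam • 1) ^ m *ᵥ y := by
  intro H
  have hN (k : ℕ) : (B - lam • 1) ^ k = aeval B ((X - C lam) ^ k) := by
    simp [Algebra.algebraMap_eq_smul_one]
  have hsep : (p.map (algebraMap F K)).Separable :=
    ((separable_iff_derivative_ne_zero hp).2 hpd).map
  obtain ⟨q, hq⟩ := dvd_iff_isRoot.2 (show (p.map (algebraMap F K)).IsRoot lam by
    rwa [IsRoot, eval_map_algebraMap])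
  have hnd : ¬ (X - C lam) ∣ q := fun hd =>
    not_isUnit_X_sub_C lam (hsep.squarefree _ (by rw [hq]; exact mul_dvd_mul_left _ hd))
  have hf : (p ^ (m + 1)).map (algebraMap F K) = (X - C lam) ^ (m + 1) * q ^ (m + 1) := by
    rw [Polynomial.map_pow, hq, mul_pow]
  obtain ⟨z, hz⟩ := H (aeval B (q ^ (m + 1)) *ᵥ w) (by
    rw [hN, Matrix.mulVec_mulVec, ← map_mul, ← hf, hw])
  rw [hN, hN, Matrix.mulVec_mulVec, ← map_mul] at hz
  replace hz := congrArg (fun v => ψ (AEval'.of _ v)) hz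
  simp only [← AEval'.smul_of_toLin', map_smul] at hz
  rw [hψ] at hz
  obtain ⟨h, hh⟩ := Ideal.Quotient.mk_surjective (ψ (AEval'.of _ z))
  rw [← hh] at hz
  change Ideal.Quotient.mk (Ideal.span {(p ^ (m + 1)).map (algebraMap F K)})
    ((X - C lam) ^ (m + 1) * h) = Ideal.Quotient.mk _ ((X - C lam) ^ m * q ^ (m + 1) * 1) at hz
  rw [Ideal.Quotient.eq, Ideal.mem_span_singleton, hf, mul_one] at hz
  have h₁ : (X - C lam) ^ (m + 1) ∣ (X - C lam) ^ m * q ^ (m + 1) :=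
    (dvd_sub_right (Dvd.intro _ rfl)).1 ((Dvd.intro _ rfl).trans hz)
  rw [pow_succ, mul_dvd_mul_iff_left (pow_ne_zero _ (X_sub_C_ne_zero lam))] at h₁
  exact hnd ((prime_X_sub_C lam).dvd_of_dvd_pow h₁)

end JordanCells

/-- The derivation `(X ^ 2 + X) d/dX` descends to each primary cyclic summand `F[X] / (p ^ e)`. -/
theorem pow_dvd_of_rank {F : Type*} [Field F] [CharP F 2] {n : ℕ} {A : Matrix (Fin n) (Fin n) F}
    (H : ∀ lam : AlgebraicClosure F, lam ≠ 0 → lam ≠ 1 → ∀ k : ℕ, Odd k →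
      ((A.map (algebraMap F (AlgebraicClosure F)) - lam • 1) ^ (k - 1)).rank +
        ((A.map (algebraMap F (AlgebraicClosure F)) - lam • 1) ^ (k + 1)).rank =
      2 * ((A.map (algebraMap F (AlgebraicClosure F)) - lam • 1) ^ k).rank)
    {p : F[X]} (hp : Irreducible p) {e : ℕ}
    (φ : AEval' (Matrix.toLin' A) →ₗ[F[X]] F[X] ⧸ Submodule.span F[X] {p ^ e})
    {v : Fin n → F} (hv : p ^ e • AEval'.of (Matrix.toLin' A) v = 0)
    (hφ : φ (AEval'.of _ v) = Ideal.Quotient.mk (Ideal.span {p ^ e}) 1) :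
    p ^ e ∣ (X ^ 2 + X) * derivative (p ^ e) := by
  rcases Nat.even_or_odd e with he | he
  · rw [derivative_pow, (CharP.cast_eq_zero_iff F 2 e).2 he.two_dvd]
    simp
  obtain ⟨m, rfl⟩ : ∃ m, e = m + 1 := ⟨e - 1, (Nat.sub_add_cancel he.pos).symm⟩
  rw [derivative_pow_succ]
  by_cases hd : derivative p = 0
  · simp [hd]
  by_cases hX : p ∣ X ^ 2 + X
  · obtain ⟨c, hc⟩ := hX
    exact ⟨c * C (m + 1 : F) * derivative p, by rw [hc]; ring⟩
  exfalso
  obtain ⟨lam, hlam⟩ := IsAlgClosed.exists_aeval_eq_zero (AlgebraicClosure F) p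
    (degree_pos_of_irreducible hp).ne'
  have hlam' : lam ^ 2 + lam ≠ 0 := fun h0 => by
    obtain ⟨a, b, hab⟩ := (hp.coprime_iff_not_dvd).2 hX
    have := congrArg (aeval lam) hab
    simp [hlam, h0] at this
  obtain ⟨ψ, hψ⟩ := exists_extension_of_cyclic_quotient (K := AlgebraicClosure F) A _ φ
  refine not_forall_exists_pow_mulVec_eq _ hp hd ?_ (hψ v hφ) hlam
    ((Matrix.rank_pow_add_eq_two_mul_iff _ m).1 (H lam ?_ ?_ (m + 1) he))
  · rw [AEval'.smul_of_toLin', LinearEquiv.map_eq_zero_iff] at hv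
    ext i
    rw [Matrix.aeval_map_algebraMap, ← RingHom.map_mulVec, hv]
    simp
  · rintro rfl
    simp at hlam'
  · rintro rfl
    exact hlam' (by rw [one_pow, CharTwo.add_self_eq_zero])

/-- Over a field `F` of characteristic 2, a matrix `A` is the sum of two
idempotent matrices iff for every eigenvalue `λ ∉ {0, 1}` of `A` in an
algebraic closure of `F`, all Jordan cells of `A` attached to `λ` are
even-sized. The Jordan cell condition is expressed via ranks: the number of
Jordan cells of size exactly `k` for `λ` equals
`rank((A - λ)^(k-1)) - 2·rank((A - λ)^k) + rank((A - λ)^(k+1))`, so all cells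
are even-sized iff this quantity vanishes for every odd `k`. -/
theorem sum_two_idempotents_iff_jordan_cells_even (F : Type*) [Field F]
    [CharP F 2] (n : ℕ) (A : Matrix (Fin n) (Fin n) F) :
    (∃ P Q : Matrix (Fin n) (Fin n) F, P ^ 2 = P ∧ Q ^ 2 = Q ∧ A = P + Q) ↔
      (∀ lam : AlgebraicClosure F, lam ≠ 0 → lam ≠ 1 →
        ∀ k : ℕ, Odd k →
          ((A.map (algebraMap F (AlgebraicClosure F)) - lam • 1) ^ (k - 1)).rank +
            ((A.map (algebraMap F (AlgebraicClosure F)) - lam • 1) ^ (k + 1)).rank =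
          2 * ((A.map (algebraMap F (AlgebraicClosure F)) - lam • 1) ^ k).rank) := by
  constructor
  · rintro ⟨P, Q, hP, hQ, rfl⟩ lam h0 h1 k ⟨j, rfl⟩
    have : CharP (AlgebraicClosure F) 2 := charP_of_injective_algebraMap' F 2
    refine (Matrix.rank_pow_add_eq_two_mul_iff _ (2 * j)).2
      (exists_pow_mulVec_eq_of_commutator (P := P.map (algebraMap F _)) ?_ h0 h1 j)
    have h := congrArg (algebraMap F (AlgebraicClosure F)).mapMatrix
      (commutator_eq_of_idempotents Matrix.add_self_eq_zero_of_charP_two hP hQ)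
    rw [map_add, map_add, map_mul, map_mul, map_pow] at h
    exact h
  · intro H
    apply exists_idempotents_of_hasIdempotentSplitting
    obtain ⟨ι, _, p, hp, e, ⟨f⟩⟩ := Module.equiv_directSum_of_isTorsion
      (AEval.isTorsion_of_finiteDimensional F (Fin n → F) (Matrix.toLin' A))
    classical
    refine .of_equiv f (.directSum fun i => .quotient_span ?_)
    let u := f.symm (DirectSum.lof F[X] ι _ i (Ideal.Quotient.mk _ 1))
    refine pow_dvd_of_rank H (hp i) (DirectSum.component F[X] ι _ i ∘ₗ f.toLinearMap)
      (v := (AEval'.of _).symm u) ?_ ?_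
    · rw [LinearEquiv.apply_symm_apply, ← map_smul, ← map_smul]
      have h0 : p i ^ e i • Ideal.Quotient.mk (Ideal.span {p i ^ e i}) 1 = 0 :=
        Ideal.Quotient.eq_zero_iff_mem.2 (Ideal.mem_span_singleton.2 (Dvd.intro _ rfl))
      exact (congrArg (fun x => f.symm (DirectSum.lof F[X] ι _ i x)) h0).trans (by simp)
    · simp only [LinearEquiv.apply_symm_apply, LinearMap.comp_apply, LinearEquiv.coe_coe, u]
      exact DirectSum.component.lof_self _ _ _
end

section
/- Let V be an infinite-dimensional vector space over a field F and u a finite-rank endomorphism of V with trace zero. Then u is the sum of three square-zero endomorphisms of V. -/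
open Matrix

/-- The matrix with a one at position `(i, j)`; it is zero when `i` or `j` is out of range. -/
def natSingle (F : Type*) [Field F] (n i j : ℕ) : Matrix (Fin n) (Fin n) F :=
  Matrix.of fun a b => if (a : ℕ) = i ∧ (b : ℕ) = j then 1 else 0

/-- The `s`-th superdiagonal shift plus the diagonal matrix with entries `p`. -/
def shiftAddDiag {F : Type*} [Field F] (n s : ℕ) (p : ℕ → F) : Matrix (Fin n) (Fin n) F :=
  Matrix.of fun a b => (if (a : ℕ) + s = b then 1 else 0) + (if a = b then p a else 0)

section
variable {F : Type*} [Field F] {n : ℕ}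

theorem natSingle_eq_zero_left {i j : ℕ} (h : n ≤ i) : natSingle F n i j = 0 := by
  ext a b
  simp only [natSingle, of_apply, Matrix.zero_apply]
  rw [if_neg]; omega

theorem natSingle_eq_zero_right {i j : ℕ} (h : n ≤ j) : natSingle F n i j = 0 := by
  ext a b
  simp only [natSingle, of_apply, Matrix.zero_apply]
  rw [if_neg]; omega

theorem mul_natSingle_apply (M : Matrix (Fin n) (Fin n) F) (i : Fin n) (j : ℕ) (a b : Fin n) :
    (M * natSingle F n i j) a b = if (b : ℕ) = j then M a i else 0 := by
  rw [Matrix.mul_apply, Finset.sum_eq_single i]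
  · simp [natSingle]
  · intro k _ hk
    simp [natSingle, Fin.val_inj, hk]
  · simp

theorem natSingle_mul_apply (M : Matrix (Fin n) (Fin n) F) (i : ℕ) (j : Fin n) (a b : Fin n) :
    (natSingle F n i j * M) a b = if (a : ℕ) = i then M j b else 0 := by
  rw [Matrix.mul_apply, Finset.sum_eq_single j]
  · simp [natSingle]
  · intro k _ hk
    simp [natSingle, Fin.val_inj, hk]
  · simp

/-- The commutator with `X`, as a linear map. -/
def commutatorMap (X : Matrix (Fin n) (Fin n) F) :
    Matrix (Fin n) (Fin n) F →ₗ[F] Matrix (Fin n) (Fin n) F :=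
  LinearMap.mulLeft F X - LinearMap.mulRight F X

theorem commutatorMap_apply (X Y : Matrix (Fin n) (Fin n) F) :
    commutatorMap X Y = X * Y - Y * X := rfl

theorem commutatorMap_natSingle_add (s : ℕ) (p : ℕ → F) {i j : ℕ} (hi : i + s < n) (hj : j < n) :
    commutatorMap (shiftAddDiag n s p) (natSingle F n (i + s) j) =
      natSingle F n i j - natSingle F n (i + s) (j + s)
        + (p (i + s) - p j) • natSingle F n (i + s) j := by
  ext a b
  have h1 := mul_natSingle_apply (shiftAddDiag n s p) ⟨i + s, hi⟩ j a b
  have h2 := natSingle_mul_apply (shiftAddDiag n s p) (i + s) ⟨j, hj⟩ a b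
  simp only at h1 h2
  rw [commutatorMap_apply, Matrix.sub_apply, h1, h2]
  simp only [natSingle, shiftAddDiag, of_apply, Matrix.add_apply, Matrix.sub_apply,
    Matrix.smul_apply, smul_eq_mul, Fin.ext_iff]
  grind

theorem commutatorMap_natSingle_of_lt (s : ℕ) (p : ℕ → F) {i j : ℕ} (his : i < s) (hi : i < n)
    (hj : j < n) :
    commutatorMap (shiftAddDiag n s p) (natSingle F n i j) =
      (p i - p j) • natSingle F n i j - natSingle F n i (j + s) := by
  ext a b
  have h1 := mul_natSingle_apply (shiftAddDiag n s p) ⟨i, hi⟩ j a b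
  have h2 := natSingle_mul_apply (shiftAddDiag n s p) i ⟨j, hj⟩ a b
  simp only at h1 h2
  rw [commutatorMap_apply, Matrix.sub_apply, h1, h2]
  simp only [natSingle, shiftAddDiag, of_apply, Matrix.sub_apply,
    Matrix.smul_apply, smul_eq_mul, Fin.ext_iff]
  grind

variable {s : ℕ} {p : ℕ → F}

theorem natSingle_mem_range_of_ne (hs : 0 < s) (hp : ∀ i j, p i = p j ↔ i ≡ j [MOD s])
    {i j : ℕ} (hij : p i ≠ p j) :
    natSingle F n i j ∈ LinearMap.range (commutatorMap (shiftAddDiag n s p)) := by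
  induction hm : i + (n - j) using Nat.strong_induction_on generalizing i j with
  | _ m ih =>
    have hadd : ∀ k, p (k + s) = p k := fun k => (hp _ _).2 (by simp [Nat.ModEq])
    rcases le_or_gt n i with hi | hi
    · rw [natSingle_eq_zero_left hi]; exact zero_mem _
    rcases le_or_gt n j with hj | hj
    · rw [natSingle_eq_zero_right hj]; exact zero_mem _
    have hright : natSingle F n i (j + s) ∈
        LinearMap.range (commutatorMap (shiftAddDiag n s p)) :=
      ih _ (by omega) (by rwa [hadd]) rfl
    have hne : p i - p j ≠ 0 := sub_ne_zero.2 hij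
    refine ((LinearMap.range _).smul_mem_iff hne).1 ?_
    rcases lt_or_ge i s with his | his
    · have h := commutatorMap_natSingle_of_lt s p his hi hj
      rw [← sub_add_cancel ((p i - p j) • natSingle F n i j) (natSingle F n i (j + s)), ← h]
      exact add_mem (LinearMap.mem_range_self _ _) hright
    · obtain ⟨k, rfl⟩ := Nat.exists_eq_add_of_le' his
      have hleft : natSingle F n k j ∈ LinearMap.range (commutatorMap (shiftAddDiag n s p)) :=
        ih _ (by omega) (by rwa [← hadd]) rfl
      have h := commutatorMap_natSingle_add s p hi hj
      rw [← sub_eq_iff_eq_add'] at h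
      rw [← h]
      exact sub_mem (LinearMap.mem_range_self _ _) (sub_mem hleft hright)

theorem natSingle_sub_mem_range (hp : ∀ i j, p i = p j ↔ i ≡ j [MOD s])
    {i j : ℕ} (hi : i + s < n) (hj : j < n) (hij : i ≡ j [MOD s]) :
    natSingle F n i j - natSingle F n (i + s) (j + s) ∈
      LinearMap.range (commutatorMap (shiftAddDiag n s p)) := by
  refine ⟨natSingle F n (i + s) j, ?_⟩
  rw [commutatorMap_natSingle_add s p hi hj, (hp (i + s) j).2 (by simpa [Nat.ModEq] using hij)]
  simp

theorem natSingle_mem_range_of_lt (hs : 0 < s) (hp : ∀ i j, p i = p j ↔ i ≡ j [MOD s])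
    {i j : ℕ} (hij : i < j) :
    natSingle F n i j ∈ LinearMap.range (commutatorMap (shiftAddDiag n s p)) := by
  induction hm : n - j using Nat.strong_induction_on generalizing i j with
  | _ m ih =>
    by_cases hmod : i ≡ j [MOD s]
    · rcases le_or_gt n j with hj | hj
      · rw [natSingle_eq_zero_right hj]; exact zero_mem _
      have hle : i + s ≤ j := hmod.add_le_of_lt hij
      rw [← sub_add_cancel (natSingle F n i j) (natSingle F n (i + s) (j + s))]
      exact add_mem (natSingle_sub_mem_range hp (by omega) hj hmod)
        (ih _ (by omega) (by omega) rfl)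
    · exact natSingle_mem_range_of_ne hs hp (mt (hp i j).1 hmod)

theorem natSingle_diag_sub_mem_range (hs : 0 < s) (hp : ∀ i j, p i = p j ↔ i ≡ j [MOD s])
    {i : ℕ} (hi : i < n) :
    natSingle F n i i - natSingle F n (i % s) (i % s) ∈
      LinearMap.range (commutatorMap (shiftAddDiag n s p)) := by
  induction i using Nat.strong_induction_on with
  | _ i ih =>
    rcases lt_or_ge i s with his | his
    · rw [Nat.mod_eq_of_lt his, sub_self]; exact zero_mem _
    · obtain ⟨k, rfl⟩ := Nat.exists_eq_add_of_le' his
      rw [Nat.add_mod_right]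
      have h1 := ih k (by omega) (by omega)
      have h2 := natSingle_sub_mem_range hp hi (by omega : k < n) (Nat.ModEq.refl k)
      simpa using sub_mem h1 h2

theorem eq_sum_natSingle (R : Matrix (Fin n) (Fin n) F) :
    R = ∑ a, ∑ b, R a b • natSingle F n a b := by
  ext a b
  simp only [Matrix.sum_apply, Matrix.smul_apply, natSingle, of_apply, Fin.val_inj, smul_eq_mul]
  rw [Finset.sum_eq_single a, Finset.sum_eq_single b] <;> simp +contextual [eq_comm]

/-- A matrix is a commutator if its entries below the diagonal in matching residue classes
vanish, as do its traces over each residue class. -/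
theorem exists_commutator_of_residues (hs : 0 < s) (hp : ∀ i j, p i = p j ↔ i ≡ j [MOD s])
    (R : Matrix (Fin n) (Fin n) F)
    (hR : ∀ i j : Fin n, j < i → (i : ℕ) ≡ j [MOD s] → R i j = 0)
    (htr : ∀ c < s, ∑ i : Fin n with i.val % s = c, R i i = 0) :
    ∃ X Y : Matrix (Fin n) (Fin n) F, R = X * Y - Y * X := by
  suffices h : R ∈ LinearMap.range (commutatorMap (shiftAddDiag n s p)) by
    obtain ⟨Y, hY⟩ := h
    exact ⟨_, Y, hY.symm⟩
  rw [← Submodule.ker_mkQ (LinearMap.range _), LinearMap.mem_ker]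
  set q := (LinearMap.range (commutatorMap (shiftAddDiag n s p))).mkQ with hq
  have hq0 : ∀ M, M ∈ LinearMap.range (commutatorMap (shiftAddDiag n s p)) → q M = 0 :=
    fun M hM => by rwa [← LinearMap.mem_ker, hq, Submodule.ker_mkQ]
  have hrow : ∀ a : Fin n, q (∑ b, R a b • natSingle F n a b) =
      R a a • q (natSingle F n ((a : ℕ) % s) ((a : ℕ) % s)) := by
    intro a
    rw [map_sum, Finset.sum_eq_single a]
    · rw [map_smul, sub_eq_zero.1 ((map_sub q _ _).symm.trans
        (hq0 _ (natSingle_diag_sub_mem_range hs hp a.2)))]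
    · intro b _ hb
      rw [map_smul]
      rcases lt_or_gt_of_ne hb with hlt | hlt
      · by_cases hmod : (a : ℕ) ≡ b [MOD s]
        · rw [hR a b hlt hmod, zero_smul]
        · rw [hq0 _ (natSingle_mem_range_of_ne hs hp (mt (hp a b).1 hmod)), smul_zero]
      · rw [hq0 _ (natSingle_mem_range_of_lt hs hp hlt), smul_zero]
    · simp
  rw [eq_sum_natSingle R, map_sum, Finset.sum_congr rfl fun a _ => hrow a,
    ← Finset.sum_fiberwise_of_maps_to (t := Finset.range s) (g := fun a : Fin n => (a : ℕ) % s)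
      fun a _ => Finset.mem_range.2 (Nat.mod_lt _ hs)]
  refine Finset.sum_eq_zero fun c hc => ?_
  rw [Finset.sum_congr rfl (g := fun a => R a a • q (natSingle F n c c))
    fun a ha => by rw [(Finset.mem_filter.1 ha).2], ← Finset.sum_smul,
    htr c (Finset.mem_range.1 hc), zero_smul]

theorem exists_commutator_of_upperTriangular (R : Matrix (Fin n) (Fin n) F)
    (hR : ∀ i j : Fin n, j < i → R i j = 0) (htr : R.trace = 0) :
    ∃ X Y : Matrix (Fin n) (Fin n) F, R = X * Y - Y * X := by
  refine exists_commutator_of_residues (s := 1) (p := fun _ => 0) one_pos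
    (fun i j => by simp [Nat.modEq_one]) R (fun i j h _ => hR i j h) fun c hc => ?_
  obtain rfl : c = 0 := by omega
  simpa [Matrix.trace, Nat.mod_one] using htr

theorem exists_commutator_of_hessenberg_of_even (R : Matrix (Fin n) (Fin n) F)
    (hR : ∀ i j : Fin n, (j : ℕ) + 1 < i → R i j = 0) (htr : R.trace = 0)
    (heven : ∑ i : Fin n with i.val % 2 = 0, R i i = 0) :
    ∃ X Y : Matrix (Fin n) (Fin n) F, R = X * Y - Y * X := by
  refine exists_commutator_of_residues (s := 2) (p := fun i => if i % 2 = 0 then 0 else 1) two_pos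
    (fun i j => ?_) R (fun i j h hm => hR i j ?_) fun c hc => ?_
  · rcases Nat.mod_two_eq_zero_or_one i with h | h <;>
      rcases Nat.mod_two_eq_zero_or_one j with h' | h' <;> simp [Nat.ModEq, h, h']
  · have : (j : ℕ) < i := h
    have := hm.symm.add_le_of_lt this
    omega
  · interval_cases c
    · exact heven
    · have h := Finset.sum_filter_add_sum_filter_not Finset.univ
        (fun i : Fin n => (i : ℕ) % 2 = 0) fun i => R i i
      rw [heven, zero_add] at h
      simp only [Nat.mod_two_ne_zero] at h
      exact h.trans htr

/-- A trace-zero upper Hessenberg matrix with nonzero `(1, 0)` entry is a commutator. -/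
theorem exists_commutator_of_hessenberg (R : Matrix (Fin n) (Fin n) F) (hn : 1 < n)
    (hR : ∀ i j : Fin n, (j : ℕ) + 1 < i → R i j = 0) (htr : R.trace = 0)
    (hne : R ⟨1, hn⟩ ⟨0, by omega⟩ ≠ 0) :
    ∃ X Y : Matrix (Fin n) (Fin n) F, R = X * Y - Y * X := by
  set z : Fin n := ⟨0, by omega⟩ with hz
  set o : Fin n := ⟨1, hn⟩ with ho
  set d : F := -(∑ i : Fin n with i.val % 2 = 0, R i i) / R o z with hd
  set E : Matrix (Fin n) (Fin n) F := natSingle F n z o with hE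
  have hEE : E * E = 0 := by
    ext a b
    rw [hE, natSingle_mul_apply]
    simp [natSingle, hz, ho]
  have hinv : (1 - d • E) * (1 + d • E) = 1 := by
    simp only [sub_mul, mul_add, one_mul, mul_one, smul_mul_smul_comm, hEE, smul_zero]
    abel
  have hinv' : (1 + d • E) * (1 - d • E) = 1 := mul_eq_one_comm.1 hinv
  set R' := (1 + d • E) * R * (1 - d • E) with hR'
  have hRR' : R = (1 - d • E) * R' * (1 + d • E) := by
    rw [hR']
    calc R = ((1 - d • E) * (1 + d • E)) * R * ((1 - d • E) * (1 + d • E)) := by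
          rw [hinv, one_mul, mul_one]
      _ = _ := by simp only [mul_assoc]
  have hentry : ∀ a b, R' a b = R a b + d * (if a = z then R o b else 0)
      - d * (if b = o then R a z + d * (if a = z then R o z else 0) else 0) := by
    intro a b
    have h1 : ∀ a b, ((1 + d • E) * R) a b = R a b + d * (if a = z then R o b else 0) := by
      intro a b
      rw [add_mul, one_mul, smul_mul_assoc, Matrix.add_apply, Matrix.smul_apply, hE,
        natSingle_mul_apply, smul_eq_mul]
      simp only [Fin.val_inj]
    rw [hR', mul_sub, mul_one, mul_smul_comm, Matrix.sub_apply, Matrix.smul_apply, hE,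
      mul_natSingle_apply, ← hE, h1, h1, smul_eq_mul]
    simp only [Fin.val_inj]
  obtain ⟨X, Y, hXY⟩ : ∃ X Y : Matrix (Fin n) (Fin n) F, R' = X * Y - Y * X := by
    refine exists_commutator_of_hessenberg_of_even R' (fun i j hij => ?_) ?_ ?_
    · have hiz : i ≠ z := by rintro rfl; simp [hz] at hij
      rw [hentry, hR i j hij, if_neg hiz]
      split_ifs with hjo
      · rw [hR i z (by simp [hz]; omega)]; simp
      · simp
    · rw [hR', Matrix.trace_mul_comm, ← mul_assoc, hinv, one_mul, htr]
    · have : ∀ i ∈ ({i : Fin n | (i : ℕ) % 2 = 0} : Finset (Fin n)),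
          R' i i = R i i + if i = z then d * R o z else 0 := by
        intro i hi
        have hio : i ≠ o := by
          rintro rfl
          simp [ho] at hi
        rw [hentry, if_neg hio]
        split_ifs with h
        · rw [h]; ring
        · ring
      rw [Finset.sum_congr rfl this, Finset.sum_add_distrib, Finset.sum_ite_eq',
        if_pos (by simp [hz]), hd, div_mul_cancel₀ _ hne, add_neg_cancel]
  refine ⟨(1 - d • E) * X * (1 + d • E), (1 - d • E) * Y * (1 + d • E), ?_⟩
  have hconj : ∀ A B : Matrix (Fin n) (Fin n) F,
      (1 - d • E) * A * (1 + d • E) * ((1 - d • E) * B * (1 + d • E)) =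
        (1 - d • E) * (A * B) * (1 + d • E) := by
    intro A B
    calc _ = (1 - d • E) * A * ((1 + d • E) * (1 - d • E)) * B * (1 + d • E) := by
          simp only [mul_assoc]
      _ = _ := by rw [hinv', mul_one]; simp only [mul_assoc]
  rw [hconj, hconj, ← sub_mul, ← mul_sub, ← hXY, ← hRR']

end

section
variable {F : Type*} [Field F]

theorem exists_hessenberg_family {V : Type*} [AddCommGroup V] [Module F V] [FiniteDimensional F V]
    (f : Module.End F V) {x : V} (hx : f x ∉ Submodule.span F {x}) (k : ℕ)
    (hk : k + 2 ≤ Module.finrank F V) :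
    ∃ e : ℕ → V, e 0 = x ∧ e 1 = f x ∧ LinearIndependent F (fun i : Fin (k + 2) => e i) ∧
      ∀ j < k + 1, f (e j) ∈ Submodule.span F (e '' Set.Iic (j + 1)) := by
  induction k with
  | zero =>
    have hx0 : x ≠ 0 := by rintro rfl; simp at hx
    refine ⟨fun i => if i = 0 then x else f x, by simp, by simp, ?_, ?_⟩
    · have h := (LinearIndependent.pair_iff' hx0).2
        fun a ha => hx (Submodule.mem_span_singleton.2 ⟨a, ha⟩)
      convert h using 1
      ext i
      fin_cases i <;> simp
    · intro j hj
      obtain rfl : j = 0 := by omega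
      exact Submodule.subset_span ⟨1, by simp, by simp⟩
  | succ k ih =>
    obtain ⟨e, h0, h1, hli, hf⟩ := ih (by omega)
    set S := Submodule.span F (Set.range fun i : Fin (k + 2) => e i) with hS
    obtain ⟨v, hvS, hv⟩ : ∃ v, v ∉ S ∧ f (e (k + 1)) ∈ S ⊔ Submodule.span F {v} := by
      by_cases h : f (e (k + 1)) ∈ S
      · obtain ⟨v, hv⟩ : ∃ v, v ∉ S := by
          by_contra! hall
          have htop : S = ⊤ := Submodule.eq_top_iff'.2 hall
          have hcard := finrank_span_eq_card hli
          rw [← hS, htop, finrank_top, Fintype.card_fin] at hcard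
          omega
        exact ⟨v, hv, Submodule.mem_sup_left h⟩
      · exact ⟨_, h, Submodule.mem_sup_right (Submodule.mem_span_singleton_self _)⟩
    have hne : ∀ {j}, j < k + 2 → Function.update e (k + 2) v j = e j :=
      fun hj => Function.update_of_ne (by omega) _ _
    refine ⟨Function.update e (k + 2) v, by rw [hne (by omega), h0], by rw [hne (by omega), h1],
      ?_, fun j hj => ?_⟩
    · have h := linearIndependent_finSnoc.2 ⟨hli, hvS⟩
      convert h using 1
      ext i
      refine Fin.lastCases ?_ (fun i => ?_) i
      · simp
      · rw [Fin.snoc_castSucc, Fin.val_castSucc, hne i.2]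
    · rw [hne (by omega)]
      rcases Nat.lt_succ_iff_lt_or_eq.1 hj with hj | rfl
      · convert hf j hj using 2
        refine Set.image_congr fun i hi => hne ?_
        simp only [Set.mem_Iic] at hi
        omega
      · refine (sup_le (Submodule.span_le.2 ?_) (Submodule.span_le.2 ?_) :
          S ⊔ Submodule.span F {v} ≤ _) hv
        · rintro _ ⟨i, rfl⟩
          exact Submodule.subset_span ⟨i, Set.mem_Iic.2 (by omega), hne i.2⟩
        · rintro _ rfl
          exact Submodule.subset_span ⟨k + 2, by simp, by simp⟩

/-- Every trace-zero endomorphism of a finite-dimensional space is a commutator. -/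
theorem exists_commutator_of_trace_eq_zero {V : Type*} [AddCommGroup V] [Module F V]
    [FiniteDimensional F V] (f : Module.End F V) (hf : LinearMap.trace F V f = 0) :
    ∃ X Y : Module.End F V, f = X * Y - Y * X := by
  have key : ∀ b : Module.Basis (Fin (Module.finrank F V)) F V,
      (∃ X Y : Matrix (Fin (Module.finrank F V)) (Fin (Module.finrank F V)) F,
        LinearMap.toMatrix b b f = X * Y - Y * X) → ∃ X Y : Module.End F V, f = X * Y - Y * X := by
    rintro b ⟨X, Y, h⟩
    let φ := LinearMap.toMatrixAlgEquiv b
    refine ⟨φ.symm X, φ.symm Y, φ.injective ?_⟩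
    rw [map_sub, map_mul, map_mul, φ.apply_symm_apply, φ.apply_symm_apply]
    exact h
  by_cases hx : ∃ x, f x ∉ Submodule.span F {x}
  · obtain ⟨x, hx⟩ := hx
    have hn : 2 ≤ Module.finrank F V := by
      have hx0 : x ≠ 0 := by rintro rfl; simp at hx
      simpa using ((LinearIndependent.pair_iff' hx0).2
        fun a ha => hx (Submodule.mem_span_singleton.2 ⟨a, ha⟩)).fintype_card_le_finrank
    obtain ⟨e, h0, h1, hli, hfe⟩ :=
      exists_hessenberg_family f hx (Module.finrank F V - 2) (by omega)
    have hli' : LinearIndependent F (fun i : Fin (Module.finrank F V) => e i) :=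
      hli.comp (Fin.cast (by omega)) (Fin.cast_injective _)
    have : Nonempty (Fin (Module.finrank F V)) := ⟨⟨0, by omega⟩⟩
    let b := basisOfLinearIndependentOfCardEqFinrank hli' (by simp)
    have hb : ∀ i, b i = e i := fun i => by simp [b]
    refine key b (exists_commutator_of_hessenberg _ hn (fun i j hij => ?_) ?_ ?_)
    · rw [LinearMap.toMatrix_apply, hb]
      have hle : Submodule.span F (e '' Set.Iic ((j : ℕ) + 1)) ≤ LinearMap.ker (b.coord i) := by
        refine Submodule.span_le.2 ?_
        rintro _ ⟨l, hl, rfl⟩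
        simp only [Set.mem_Iic] at hl
        have hbl := hb ⟨l, by omega⟩
        simp only at hbl
        rw [SetLike.mem_coe, LinearMap.mem_ker, ← hbl, Module.Basis.coord_apply,
          Module.Basis.repr_self, Finsupp.single_eq_of_ne]
        intro hil
        have := congrArg Fin.val hil
        simp only at this
        omega
      exact hle (hfe j (by omega))
    · rw [← LinearMap.trace_eq_matrix_trace, hf]
    · have hb0 := hb ⟨0, by omega⟩
      have hb1 := hb ⟨1, hn⟩
      simp only at hb0 hb1
      rw [LinearMap.toMatrix_apply, hb0, h0, ← h1, ← hb1]
      simp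
  · push Not at hx
    let b := Module.finBasis F V
    refine key b (exists_commutator_of_upperTriangular _ (fun i j hij => ?_) ?_)
    · obtain ⟨c, hc⟩ := Submodule.mem_span_singleton.1 (hx (b j))
      rw [LinearMap.toMatrix_apply, ← hc]
      simp [hij.ne]
    · rw [← LinearMap.trace_eq_matrix_trace, hf]

/-- A finite-rank endomorphism `P ∘ Q` with `Q ∘ P` a commutator is a sum of three square-zero
endomorphisms, provided that the kernel of `Q` contains a copy of the middle space that is
split off by a map vanishing on the range of `P`. -/
theorem sum_three_square_zero_of_commutator {V I : Type*} [AddCommGroup V] [Module F V]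
    [AddCommGroup I] [Module F I] (P : I →ₗ[F] V) (Q : V →ₗ[F] I)
    (hP : Function.Injective P) (hQ : Function.Surjective Q)
    (ι : I →ₗ[F] V) (π : V →ₗ[F] I) (hπι : π ∘ₗ ι = LinearMap.id) (hQι : Q ∘ₗ ι = 0)
    (hπP : π ∘ₗ P = 0) (X Y : Module.End F I) (hXY : Q ∘ₗ P = X * Y - Y * X) :
    ∃ a b c : Module.End F V, a ^ 2 = 0 ∧ b ^ 2 = 0 ∧ c ^ 2 = 0 ∧ P ∘ₗ Q = a + b + c := by
  obtain ⟨S₀, hS₀⟩ := P.exists_leftInverse_of_injective (LinearMap.ker_eq_bot.2 hP)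
  obtain ⟨T₀, hT₀⟩ := Q.exists_rightInverse_of_surjective (LinearMap.range_eq_top.2 hQ)
  have hπι' : ∀ v, π (ι v) = v := LinearMap.congr_fun hπι
  have hQι' : ∀ v, Q (ι v) = 0 := LinearMap.congr_fun hQι
  have hπP' : ∀ v, π (P v) = 0 := LinearMap.congr_fun hπP
  have hXY' : ∀ v, Q (P v) = X (Y v) - Y (X v) := LinearMap.congr_fun hXY
  have hS₀' : ∀ v, S₀ (P v) = v := LinearMap.congr_fun hS₀
  have hT₀' : ∀ v, Q (T₀ v) = v := LinearMap.congr_fun hT₀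
  obtain ⟨S, hSP, hSι⟩ : ∃ S : V →ₗ[F] I, (∀ v, S (P v) = X v) ∧ ∀ v, S (ι v) = 0 :=
    ⟨X ∘ₗ (S₀ - S₀ ∘ₗ ι ∘ₗ π), fun v => by simp [hS₀', hπP'], fun v => by simp [hπι']⟩
  obtain ⟨T, hQT, hπT⟩ : ∃ T : I →ₗ[F] V, (∀ v, Q (T v) = Y v) ∧ ∀ v, π (T v) = 0 :=
    ⟨(T₀ - ι ∘ₗ π ∘ₗ T₀) ∘ₗ Y, fun v => by simp [hT₀', hQι'], fun v => by simp [hπι']⟩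
  let g : Module.End F V := (1 + T ∘ₗ π) * (1 + ι ∘ₗ S)
  let g' : Module.End F V := (1 - ι ∘ₗ S) * (1 - T ∘ₗ π)
  have hgg' : g * g' = 1 := by
    ext v
    simp [g, g', hSι, hπT]
  have hg'g : g' * g = 1 := by
    ext v
    simp [g, g', hSι, hπT]
  let K : I →ₗ[F] V := P + T ∘ₗ X
  have hQK : ∀ v, Q (K v) = X (Y v) := fun v => by simp [K, hXY', hQT]
  have hπK : ∀ v, π (K v) = 0 := fun v => by simp [K, hπP', hπT]
  let a : Module.End F V := (K + ι) ∘ₗ (Q - X ∘ₗ Y ∘ₗ π)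
  let b : Module.End F V := K ∘ₗ (X ∘ₗ Y - Y) ∘ₗ π
  let c : Module.End F V := ι ∘ₗ (X - 1) ∘ₗ Q
  have ha : a * a = 0 := by
    ext v
    simp [a, hQK, hπK, hQι', hπι']
  have hb : b * b = 0 := by
    ext v
    simp [b, hπK]
  have hc : c * c = 0 := by
    ext v
    simp [c, hQι']
  have hsum : g * (P ∘ₗ Q) = (a + b + c) * g := by
    ext v
    simp only [g, a, b, c, K, Module.End.mul_apply, LinearMap.add_apply, LinearMap.sub_apply,
      LinearMap.comp_apply, Module.End.one_apply, map_add, map_sub, hSP, hπP', hπι', hQι', hQT,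
      hπT, map_zero]
    abel
  have hconj : ∀ w : Module.End F V, w * w = 0 → (g' * w * g) ^ 2 = 0 := by
    intro w hw
    calc (g' * w * g) ^ 2 = g' * w * (g * g') * w * g := by simp only [sq, mul_assoc]
      _ = g' * (w * w) * g := by rw [hgg', mul_one]; simp only [mul_assoc]
      _ = 0 := by rw [hw, mul_zero, zero_mul]
  refine ⟨g' * a * g, g' * b * g, g' * c * g, hconj a ha, hconj b hb, hconj c hc, ?_⟩
  rw [← add_mul, ← mul_add, ← add_mul, ← mul_add, mul_assoc, ← hsum, ← mul_assoc, hg'g, one_mul]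

/-- In an infinite-dimensional space, the kernel of a finite-rank endomorphism contains a copy of
the range which is split off by a map vanishing on the range. -/
theorem exists_split_copy_of_range {V : Type*} [AddCommGroup V] [Module F V]
    (hV : ¬ FiniteDimensional F V) (u : Module.End F V)
    [FiniteDimensional F (LinearMap.range u)] :
    ∃ (ι : LinearMap.range u →ₗ[F] V) (π : V →ₗ[F] LinearMap.range u),
      π ∘ₗ ι = LinearMap.id ∧ u ∘ₗ ι = 0 ∧ π ∘ₗ u = 0 := by
  set q := (LinearMap.range u).mkQ with hq
  have hrange : (LinearMap.range u).FG := Module.Finite.iff_fg.1 inferInstance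
  have hinf : ¬ FiniteDimensional F ((LinearMap.ker u).map q) := by
    intro h
    have hker : (LinearMap.ker u).FG := by
      refine Submodule.fg_of_fg_map_of_fg_inf_ker q (Module.Finite.iff_fg.1 h) ?_
      rw [hq, Submodule.ker_mkQ]
      exact Module.Finite.iff_fg.1
        (Submodule.finiteDimensional_of_le (inf_le_right : _ ≤ LinearMap.range u))
    refine hV ⟨Submodule.fg_of_fg_map_of_fg_inf_ker u ?_ ?_⟩
    · rwa [Submodule.map_top]
    · rwa [top_inf_eq]
  obtain ⟨j, hj⟩ : ∃ j : LinearMap.range u →ₗ[F] (LinearMap.ker u).map q,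
      Function.Injective j := by
    rw [← rank_le_iff_exists_linearMap]
    exact (Module.rank_lt_aleph0_iff.2 inferInstance).le.trans
      (not_lt.1 (mt Module.rank_lt_aleph0_iff.1 hinf))
  obtain ⟨σ, hσ⟩ := (q.submoduleMap (LinearMap.ker u)).exists_rightInverse_of_surjective
    (LinearMap.range_eq_top.2 (q.submoduleMap_surjective _))
  let ι : LinearMap.range u →ₗ[F] V := (LinearMap.ker u).subtype ∘ₗ σ ∘ₗ j
  have hqι : ∀ v, q (ι v) = j v := fun v => congrArg Subtype.val (LinearMap.congr_fun hσ (j v))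
  obtain ⟨π₀, hπ₀⟩ := (q ∘ₗ ι).exists_leftInverse_of_injective (LinearMap.ker_eq_bot.2
    fun v w h => hj (Subtype.ext (by simpa [hqι] using h)))
  refine ⟨ι, π₀ ∘ₗ q, by rw [LinearMap.comp_assoc, hπ₀], ?_, ?_⟩
  · ext v
    exact (σ (j v)).2
  · ext v
    have : q (u v) = 0 := (Submodule.Quotient.mk_eq_zero _).2 (LinearMap.mem_range_self u v)
    simp [this]

end

/-- Let `V` be an infinite-dimensional vector space and `u` a finite-rank
endomorphism of `V` with trace zero (the trace being computed from the
endomorphism induced by `u` on any finite-dimensional subspace `W` containing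
the range of `u`). Then `u` is the sum of three square-zero endomorphisms. -/
theorem finite_rank_trace_zero_sum_three_square_zero (F : Type*) [Field F]
    (V : Type*) [AddCommGroup V] [Module F V] (hV : ¬ FiniteDimensional F V)
    (u : Module.End F V) (W : Submodule F V) (hW : FiniteDimensional F W)
    (hrange : ∀ x : V, u x ∈ W)
    (htrace : LinearMap.trace F W (u.restrict fun x _ => hrange x) = 0) :
    ∃ a b c : Module.End F V,
      a ^ 2 = 0 ∧ b ^ 2 = 0 ∧ c ^ 2 = 0 ∧ u = a + b + c := by
  have hle : LinearMap.range u ≤ W := by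
    rintro _ ⟨x, rfl⟩
    exact hrange x
  have : FiniteDimensional F (LinearMap.range u) := Submodule.finiteDimensional_of_le hle
  obtain ⟨ι, π, hπι, huι, hπu⟩ := exists_split_copy_of_range hV u
  have htr : LinearMap.trace F (LinearMap.range u)
      (u.rangeRestrict ∘ₗ (LinearMap.range u).subtype) = 0 := by
    rw [← htrace]
    exact LinearMap.trace_comp_comm' (Submodule.inclusion hle) (u.rangeRestrict ∘ₗ W.subtype)
  obtain ⟨X, Y, hXY⟩ := exists_commutator_of_trace_eq_zero _ htr
  refine sum_three_square_zero_of_commutator (LinearMap.range u).subtype u.rangeRestrict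
    (Submodule.subtype_injective _) u.surjective_rangeRestrict ι π hπι ?_ ?_ X Y hXY
  · ext v
    exact LinearMap.congr_fun huι v
  · ext ⟨_, v, rfl⟩
    exact congrArg Subtype.val (LinearMap.congr_fun hπu v)
end
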